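/- arXiv:1208.5241 — 3 statements merged into one kernel-verified Lean document; each statement's English description precedes it below -/
import Mathlib

section
/- For every integer m ≥ 0, every p ∈ [1,∞] and every α > 0, with γ = max(0, m − 1/p), there is a constant c > 0, depending only on f, D, m, p and α, such that for every ν ∈ (0,1], the time average over [T₁,T₂] satisfies { |u(t)|_{m,p}^α }^{1/α} ≥ c ν^{−γ}. -/
open MeasureTheory Set
open scoped ENNReal

/-- The `L^p` norm (on the circle, i.e. over one period `(0,1]`) of the `m`-th
derivative of a function `v : ℝ → ℝ` (identified with a function on `S¹ = ℝ/ℤ`). -/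
noncomputable def sobLp (m : ℕ) (p : ℝ≥0∞) (v : ℝ → ℝ) : ℝ :=
  (eLpNorm (iteratedDeriv m v) p (volume.restrict (Ioc (0:ℝ) 1))).toReal

/-- `u` is a smooth, space-periodic, zero-mean-value solution of the generalised
Burgers equation `u_t + f'(u) u_x - ν u_xx = 0` with strongly convex `f` and
nonzero initial condition. -/
structure IsBurgersSolution (f : ℝ → ℝ) (σ ν : ℝ) (u : ℝ → ℝ → ℝ) : Prop where
  hf : ContDiff ℝ (⊤ : ℕ∞) f
  hσ : 0 < σ
  hconv : ∀ y, σ ≤ iteratedDeriv 2 f y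
  hν : 0 < ν
  hu : ContDiffOn ℝ (⊤ : ℕ∞) (Function.uncurry u) (Ici (0:ℝ) ×ˢ univ)
  hper : ∀ t x, u t (x + 1) = u t x
  hpde : ∀ t, 0 < t → ∀ x,
    deriv (fun s => u s x) t + deriv f (u t x) * deriv (u t) x
      - ν * deriv (deriv (u t)) x = 0
  hmean : ∀ t, 0 ≤ t → ∫ x in Ioc (0:ℝ) 1, u t x = 0
  hinit : ∃ x, u 0 x ≠ 0

/-- The quantity `D = max(|u₀|₁⁻¹, |u₀|_{1,∞})`. -/
noncomputable def burgersD (u : ℝ → ℝ → ℝ) : ℝ :=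
  max (sobLp 0 1 (u 0))⁻¹ (sobLp 1 ⊤ (u 0))

/-- `T₁ = D⁻² C̃⁻¹ / 4`. -/
noncomputable def burgersT₁ (D Ct : ℝ) : ℝ := (D ^ 2)⁻¹ * Ct⁻¹ / 4

/-- `T₂ = max(3T₁/2, 2Dσ⁻¹)`. -/
noncomputable def burgersT₂ (σ D Ct : ℝ) : ℝ :=
  max (3 / 2 * burgersT₁ D Ct) (2 * D * σ⁻¹)

/-- Time average over `[T₁, T₂]`. -/
noncomputable def timeAvg (T₁ T₂ : ℝ) (A : ℝ → ℝ) : ℝ :=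
  (T₂ - T₁)⁻¹ * ∫ t in T₁..T₂, A t

/-- The structure function `S_p(ℓ)`. -/
noncomputable def structFun (T₁ T₂ : ℝ) (u : ℝ → ℝ → ℝ) (p ℓ : ℝ) : ℝ :=
  timeAvg T₁ T₂ (fun t => ∫ x in Ioc (0:ℝ) 1, |u t (x + ℓ) - u t x| ^ p)


open MeasureTheory Set
open scoped ENNReal

/-- closed half plane -/
def HS : Set (ℝ × ℝ) := Ici (0:ℝ) ×ˢ univ

lemma uniqueDiffOn_HS : UniqueDiffOn ℝ HS := (uniqueDiffOn_Ici 0).prod uniqueDiffOn_univ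

lemma HS_mem {t : ℝ} (ht : 0 ≤ t) (x : ℝ) : (t, x) ∈ HS := ⟨ht, mem_univ _⟩

lemma HS_nhds {t : ℝ} (ht : 0 < t) (x : ℝ) : HS ∈ nhds (t, x) :=
  prod_mem_nhds (Ici_mem_nhds ht) Filter.univ_mem

lemma dx_hasDerivAt {V : ℝ × ℝ → ℝ} (hV : ContDiffOn ℝ (⊤ : ℕ∞) V HS) {t : ℝ} (ht : 0 ≤ t)
    (x : ℝ) : HasDerivAt (fun y => V (t, y)) (fderivWithin ℝ V HS (t, x) (0, 1)) x := by
  have h1 : HasFDerivWithinAt V (fderivWithin ℝ V HS (t, x)) HS (t, x) :=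
    (hV.differentiableOn (by simp) _ (HS_mem ht x)).hasFDerivWithinAt
  have h2 : HasDerivAt (fun y : ℝ => ((t, y) : ℝ × ℝ)) (0, 1) x :=
    (hasDerivAt_const x t).prodMk (hasDerivAt_id x)
  have h3 := h1.comp_hasDerivWithinAt x (s := univ) h2.hasDerivWithinAt
    (fun y _ => HS_mem ht y)
  exact hasDerivWithinAt_univ.1 h3

lemma dx_contDiffOn {V : ℝ × ℝ → ℝ} (hV : ContDiffOn ℝ (⊤ : ℕ∞) V HS) :
    ContDiffOn ℝ (⊤ : ℕ∞) (fun q : ℝ × ℝ => deriv (fun y => V (q.1, y)) q.2) HS := by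
  have h1 : ContDiffOn ℝ (⊤ : ℕ∞) (fun q => fderivWithin ℝ V HS q (0, 1)) HS :=
    (hV.fderivWithin uniqueDiffOn_HS (by simp)).clm_apply contDiffOn_const
  refine h1.congr ?_
  rintro ⟨t, x⟩ ⟨ht, -⟩
  exact (dx_hasDerivAt hV ht x).deriv

lemma iter_contDiffOn {u : ℝ → ℝ → ℝ}
    (hu : ContDiffOn ℝ (⊤ : ℕ∞) (Function.uncurry u) HS) (k : ℕ) :
    ContDiffOn ℝ (⊤ : ℕ∞) (fun q : ℝ × ℝ => iteratedDeriv k (u q.1) q.2) HS := by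
  induction k with
  | zero =>
    simp only [iteratedDeriv_zero]
    exact hu
  | succ k ih =>
    have := dx_contDiffOn ih
    simp only [iteratedDeriv_succ]
    exact this

lemma dt_hasDerivAt {V : ℝ × ℝ → ℝ} (hV : ContDiffOn ℝ (⊤ : ℕ∞) V HS) {t : ℝ} (ht : 0 < t)
    (x : ℝ) : HasDerivAt (fun s => V (s, x)) (fderiv ℝ V (t, x) (1, 0)) t := by
  have h1 : HasFDerivAt V (fderiv ℝ V (t, x)) (t, x) :=
    ((hV.contDiffAt (HS_nhds ht x)).differentiableAt (by simp)).hasFDerivAt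
  have h2 : HasDerivAt (fun s : ℝ => ((s, x) : ℝ × ℝ)) (1, 0) t :=
    (hasDerivAt_id t).prodMk (hasDerivAt_const t x)
  exact h1.comp_hasDerivAt t h2

lemma dx_hasDerivAt' {V : ℝ × ℝ → ℝ} (hV : ContDiffOn ℝ (⊤ : ℕ∞) V HS) {t : ℝ} (ht : 0 < t)
    (x : ℝ) : HasDerivAt (fun y => V (t, y)) (fderiv ℝ V (t, x) (0, 1)) x := by
  have h1 : HasFDerivAt V (fderiv ℝ V (t, x)) (t, x) :=
    ((hV.contDiffAt (HS_nhds ht x)).differentiableAt (by simp)).hasFDerivAt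
  have h2 : HasDerivAt (fun s : ℝ => ((t, s) : ℝ × ℝ)) (0, 1) x :=
    (hasDerivAt_const x t).prodMk (hasDerivAt_id x)
  exact h1.comp_hasDerivAt x h2

lemma mixed_hasDerivAt {V : ℝ × ℝ → ℝ} (hV : ContDiffOn ℝ (⊤ : ℕ∞) V HS) {t : ℝ} (ht : 0 < t)
    (x : ℝ) : HasDerivAt (fun s => deriv (fun y => V (s, y)) x)
      (deriv (fun y => deriv (fun s => V (s, y)) t) x) t := by
  have hc := hV.contDiffAt (HS_nhds ht x)
  have hfd : DifferentiableAt ℝ (fderiv ℝ V) (t, x) :=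
    (hc.fderiv_right (m := 1) (WithTop.coe_le_coe.2 le_top)).differentiableAt (by simp)
  have hsymm := (hc.isSymmSndFDerivAt (by simp; exact WithTop.coe_le_coe.2 le_top)) (1, 0) (0, 1)
  have h2 : HasDerivAt (fun s : ℝ => ((s, x) : ℝ × ℝ)) (1, 0) t :=
    (hasDerivAt_id t).prodMk (hasDerivAt_const t x)
  have h3 : HasDerivAt (fun s : ℝ => ((t, s) : ℝ × ℝ)) (0, 1) x :=
    (hasDerivAt_const x t).prodMk (hasDerivAt_id x)
  have e1 : (fun s => fderiv ℝ V (s, x) (0, 1)) =ᶠ[nhds t] (fun s => deriv (fun y => V (s, y)) x) := by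
    filter_upwards [Ioi_mem_nhds ht] with s hs
    exact (dx_hasDerivAt' hV hs x).deriv.symm
  have e2 : (fun y => fderiv ℝ V (t, y) (1, 0)) = (fun y => deriv (fun s => V (s, y)) t) := by
    funext y
    exact (dt_hasDerivAt hV ht y).deriv.symm
  have g1 : HasDerivAt (fun s => fderiv ℝ V (s, x) (0, 1))
      (fderiv ℝ (fderiv ℝ V) (t, x) (1, 0) (0, 1)) t := by
    exact ((ContinuousLinearMap.apply ℝ ℝ ((0, 1) : ℝ × ℝ)).hasFDerivAt).comp_hasDerivAt t
      (hfd.hasFDerivAt.comp_hasDerivAt t h2)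
  have g2 : HasDerivAt (fun y => fderiv ℝ V (t, y) (1, 0))
      (fderiv ℝ (fderiv ℝ V) (t, x) (0, 1) (1, 0)) x := by
    exact ((ContinuousLinearMap.apply ℝ ℝ ((1, 0) : ℝ × ℝ)).hasFDerivAt).comp_hasDerivAt x
      (hfd.hasFDerivAt.comp_hasDerivAt x h3)
  rw [← e2, g2.deriv, ← hsymm]
  exact g1.congr_of_eventuallyEq e1.symm

lemma dt_contOn {V : ℝ × ℝ → ℝ} (hV : ContDiffOn ℝ (⊤ : ℕ∞) V HS) :
    ContinuousOn (fun q : ℝ × ℝ => deriv (fun s => V (s, q.2)) q.1) (Ioi (0:ℝ) ×ˢ univ) := by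
  have ho : IsOpen (Ioi (0:ℝ) ×ˢ (univ : Set ℝ)) := isOpen_Ioi.prod isOpen_univ
  have h0 : ContDiffOn ℝ (⊤ : ℕ∞) V (Ioi (0:ℝ) ×ˢ univ) :=
    hV.mono (prod_mono Ioi_subset_Ici_self subset_rfl)
  have h1 : ContinuousOn (fun q => fderiv ℝ V q (1, 0)) (Ioi (0:ℝ) ×ˢ univ) :=
    (h0.continuousOn_fderiv_of_isOpen ho (by simp)).clm_apply continuousOn_const
  refine h1.congr ?_
  rintro ⟨t, x⟩ ⟨ht, -⟩
  exact (dt_hasDerivAt hV ht x).deriv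

open MeasureTheory Set
open scoped ENNReal

lemma second_deriv_nonpos_of_isMax {g : ℝ → ℝ} {x : ℝ} (hg : Continuous g)
    (hmax : ∀ y, g y ≤ g x) : deriv (deriv g) x ≤ 0 := by
  by_contra! h
  have hl : IsLocalMax g x := Filter.Eventually.of_forall hmax
  have h0 : deriv g x = 0 := hl.deriv_eq_zero
  have hm : IsLocalMin g x := isLocalMin_of_deriv_deriv_pos h h0 hg.continuousAt
  have he : g =ᶠ[nhds x] fun _ => g x := by
    filter_upwards [hl, hm] with y h1 h2
    exact le_antisymm h1 h2
  have h1 := he.deriv.deriv_eq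
  simp at h1
  linarith

lemma deriv_nonneg_of_left_max {g : ℝ → ℝ} {t d : ℝ} (ht : 0 < t) (hg : HasDerivAt g d t)
    (hmax : ∀ s ∈ Icc 0 t, g s ≤ g t) : 0 ≤ d := by
  have h1 : Filter.Tendsto (slope g t) (nhdsWithin t (Iio t)) (nhds d) :=
    (hasDerivWithinAt_iff_tendsto_slope' (by simp)).1 hg.hasDerivWithinAt
  refine ge_of_tendsto h1 ?_
  filter_upwards [Ioo_mem_nhdsLT ht] with s hs
  rw [slope_def_field]
  apply div_nonneg_of_nonpos
  · linarith [hmax s ⟨hs.1.le, hs.2.le⟩]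
  · linarith [hs.2]

/-- Weak maximum principle. -/
lemma max_principle {Z : ℝ → ℝ → ℝ} {T M : ℝ} (hT : 0 ≤ T)
    (hc : ContinuousOn (Function.uncurry Z) HS)
    (hper : ∀ t, 0 ≤ t → Function.Periodic (Z t) 1)
    (h0 : ∀ x, Z 0 x ≤ M)
    (hd : ∀ t, 0 < t → ∀ x, M < Z t x → deriv (Z t) x = 0 → deriv (deriv (Z t)) x ≤ 0 →
      ∃ d < 0, HasDerivAt (fun s => Z s x) d t) :
    ∀ x, Z T x ≤ M := by
  have hsub : Icc 0 T ×ˢ Icc (0:ℝ) 1 ⊆ HS := prod_mono Icc_subset_Ici_self (subset_univ _)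
  obtain ⟨⟨t, x⟩, ⟨ht, hx⟩, hmax⟩ := (isCompact_Icc.prod isCompact_Icc).exists_isMaxOn
    (⟨(0, 0), ⟨by simpa using hT, by simp⟩⟩ : (Icc 0 T ×ˢ Icc (0:ℝ) 1).Nonempty) (hc.mono hsub)
  have hall : ∀ s ∈ Icc 0 T, ∀ y, Z s y ≤ Z t x := by
    intro s hs y
    have hp := (hper s hs.1)
    have e : Z s y = Z s (Int.fract y) := by
      have := hp.int_mul (⌊y⌋) (Int.fract y)
      rw [← this]; congr 1
      have := Int.fract_add_floor y
      linarith
    rw [e]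
    have hmem : (s, Int.fract y) ∈ Icc 0 T ×ˢ Icc (0:ℝ) 1 :=
      ⟨hs, Int.fract_nonneg y, (Int.fract_lt_one y).le⟩
    exact hmax hmem
  intro y
  refine (hall T ⟨hT, le_rfl⟩ y).trans ?_
  rcases eq_or_lt_of_le ht.1 with h | h
  · simp only at h; rw [← h]; exact h0 x
  · by_contra! hM
    simp only at h
    have hcx : Continuous (Z t) := by
      have : ContinuousOn (Function.uncurry Z ∘ fun y => (t, y)) univ :=
        hc.comp (by fun_prop) (fun y _ => HS_mem h.le y)
      exact continuousOn_univ.1 this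
    have hm1 : ∀ y, Z t y ≤ Z t x := hall t ht
    have hl : IsLocalMax (Z t) x := Filter.Eventually.of_forall hm1
    obtain ⟨d, hd0, hd1⟩ := hd t h x hM hl.deriv_eq_zero (second_deriv_nonpos_of_isMax hcx hm1)
    have := deriv_nonneg_of_left_max h hd1 (fun s hs => hall s ⟨hs.1, hs.2.trans ht.2⟩ x)
    linarith

section Sol
variable {f : ℝ → ℝ} {σ ν : ℝ} {u : ℝ → ℝ → ℝ}

lemma sol_smooth (h : IsBurgersSolution f σ ν u) :
    ContDiffOn ℝ (⊤ : ℕ∞) (Function.uncurry u) HS := h.hu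

lemma sol_cont_iter (h : IsBurgersSolution f σ ν u) (k : ℕ) :
    ContinuousOn (fun q : ℝ × ℝ => iteratedDeriv k (u q.1) q.2) HS :=
  (iter_contDiffOn h.hu k).continuousOn

lemma sol_x_hasDerivAt (h : IsBurgersSolution f σ ν u) (k : ℕ) {t : ℝ} (ht : 0 ≤ t) (x : ℝ) :
    HasDerivAt (iteratedDeriv k (u t)) (iteratedDeriv (k+1) (u t) x) x := by
  rw [iteratedDeriv_succ]
  exact (dx_hasDerivAt (iter_contDiffOn h.hu k) ht x).differentiableAt.hasDerivAt

lemma sol_x_contDiff (h : IsBurgersSolution f σ ν u) {t : ℝ} (ht : 0 ≤ t) :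
    ContDiff ℝ (⊤ : ℕ∞) (u t) := by
  have : ContDiffOn ℝ (⊤ : ℕ∞) (Function.uncurry u ∘ fun y => (t, y)) univ :=
    h.hu.comp (by fun_prop) (fun y _ => HS_mem ht y)
  exact contDiffOn_univ.1 this

lemma sol_ut (h : IsBurgersSolution f σ ν u) {t : ℝ} (ht : 0 < t) (x : ℝ) :
    HasDerivAt (fun s => u s x)
      (ν * iteratedDeriv 2 (u t) x - deriv f (u t x) * iteratedDeriv 1 (u t) x) t := by
  have h1 : HasDerivAt (fun s => u s x) (deriv (fun s => u s x) t) t :=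
    (dt_hasDerivAt h.hu ht x).differentiableAt.hasDerivAt
  convert h1 using 1
  have := h.hpde t ht x
  rw [iteratedDeriv_succ, iteratedDeriv_one]
  linarith

lemma f_deriv (h : IsBurgersSolution f σ ν u) (y : ℝ) : HasDerivAt f (deriv f y) y :=
  (h.hf.differentiable (by simp)).differentiableAt.hasDerivAt

lemma f_deriv2 (h : IsBurgersSolution f σ ν u) (y : ℝ) :
    HasDerivAt (deriv f) (iteratedDeriv 2 f y) y := by
  have := (h.hf.differentiable_iteratedDeriv 1 (by exact_mod_cast ENat.natCast_lt_top 1)).differentiableAt (x := y) |>.hasDerivAt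
  rw [iteratedDeriv_succ, iteratedDeriv_one]
  rwa [iteratedDeriv_one] at this

lemma ut_x (h : IsBurgersSolution f σ ν u) {t : ℝ} (ht : 0 ≤ t) (x : ℝ) :
    HasDerivAt (fun x => ν * iteratedDeriv 2 (u t) x - deriv f (u t x) * iteratedDeriv 1 (u t) x)
      (ν * iteratedDeriv 3 (u t) x - (iteratedDeriv 2 f (u t x) * iteratedDeriv 1 (u t) x
        * iteratedDeriv 1 (u t) x + deriv f (u t x) * iteratedDeriv 2 (u t) x)) x := by
  have h0 := sol_x_hasDerivAt h 0 ht x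
  rw [iteratedDeriv_zero] at h0
  exact ((sol_x_hasDerivAt h 2 ht x).const_mul ν).sub
    (((f_deriv2 h (u t x)).comp x h0).mul (sol_x_hasDerivAt h 1 ht x))

lemma sol_uxt (h : IsBurgersSolution f σ ν u) {t : ℝ} (ht : 0 < t) (x : ℝ) :
    HasDerivAt (fun s => iteratedDeriv 1 (u s) x)
      (ν * iteratedDeriv 3 (u t) x - (iteratedDeriv 2 f (u t x) * iteratedDeriv 1 (u t) x
        * iteratedDeriv 1 (u t) x + deriv f (u t x) * iteratedDeriv 2 (u t) x)) t := by
  have h1 := mixed_hasDerivAt h.hu ht x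
  have e : (fun y => deriv (fun s => Function.uncurry u (s, y)) t) =
      (fun x => ν * iteratedDeriv 2 (u t) x - deriv f (u t x) * iteratedDeriv 1 (u t) x) := by
    funext y
    exact (sol_ut h ht y).deriv
  rw [e, (ut_x h ht.le x).deriv] at h1
  simp only [iteratedDeriv_one] at h1 ⊢
  exact h1

lemma periodic_deriv {g : ℝ → ℝ} (hg : Function.Periodic g 1) :
    Function.Periodic (deriv g) 1 := by
  intro x
  have : (fun y => g (y + 1)) = g := funext hg
  rw [← deriv_comp_add_const, this]

lemma sol_per (h : IsBurgersSolution f σ ν u) (k : ℕ) (t : ℝ) :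
    Function.Periodic (iteratedDeriv k (u t)) 1 := by
  induction k with
  | zero => rw [iteratedDeriv_zero]; exact h.hper t
  | succ k ih => rw [iteratedDeriv_succ]; exact periodic_deriv ih

/-- Oleinik's estimate. -/
lemma oleinik (h : IsBurgersSolution f σ ν u) {t : ℝ} (ht : 0 < t) (x : ℝ) :
    iteratedDeriv 1 (u t) x ≤ (σ * t)⁻¹ := by
  have key := max_principle (Z := fun t x => t * iteratedDeriv 1 (u t) x) (T := t) (M := σ⁻¹)
    ht.le (continuous_fst.continuousOn.mul (sol_cont_iter h 1))
    (fun s _ x => by simp only [sol_per h 1 s x])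
    (fun x => by simpa using h.hσ.le)
    (by
      intro s hs y hM h1 h2
      have e1 : deriv (fun x => s * iteratedDeriv 1 (u s) x) =
          fun x => s * iteratedDeriv 2 (u s) x :=
        funext fun y => ((sol_x_hasDerivAt h 1 hs.le y).const_mul s).deriv
      rw [e1] at h1 h2
      rw [((sol_x_hasDerivAt h 2 hs.le y).const_mul s).deriv] at h2
      have hA : iteratedDeriv 2 (u s) y = 0 := by
        rcases mul_eq_zero.1 h1 with h | h
        · exact absurd h hs.ne'
        · exact h
      have hB : iteratedDeriv 3 (u s) y ≤ 0 := by
        by_contra! hc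
        have := mul_pos hs hc
        norm_num at h2
        linarith
      refine ⟨_, ?_, (hasDerivAt_id s).mul (sol_uxt h hs y)⟩
      simp only [id, one_mul, hA, mul_zero, add_zero]
      have hσ := h.hσ
      set w := iteratedDeriv 1 (u s) y
      have hsw : 1 < σ * (s * w) := by
        have := mul_lt_mul_of_pos_left hM hσ
        rwa [mul_inv_cancel₀ hσ.ne'] at this
      have hw : 0 < w := by
        by_contra! hc
        have : σ * (s * w) ≤ 0 := by
          have := mul_nonneg (mul_pos hσ hs).le (neg_nonneg.2 hc)
          nlinarith
        linarith
      have hf2 := h.hconv (u s y)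
      have h3 : s * (ν * iteratedDeriv 3 (u s) y) ≤ 0 :=
        mul_nonpos_of_nonneg_of_nonpos hs.le (mul_nonpos_of_nonneg_of_nonpos h.hν.le hB)
      have h4 : w * (σ * (s * w)) ≤ s * (iteratedDeriv 2 f (u s y) * w * w) := by
        have := mul_le_mul_of_nonneg_right hf2 (mul_nonneg hs.le (mul_nonneg hw.le hw.le))
        nlinarith
      have h5 : w < w * (σ * (s * w)) := by nlinarith
      nlinarith)
  have k := key x
  rw [mul_inv]
  rw [← div_eq_mul_inv, le_div_iff₀ ht]
  linarith

/-- maximum principle for `f(u) - ν u_x`. -/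
lemma flux_bound (h : IsBurgersSolution f σ ν u) {M : ℝ}
    (hM : ∀ x, f (u 0 x) - ν * iteratedDeriv 1 (u 0) x ≤ M) {t : ℝ} (ht : 0 ≤ t) (x : ℝ) :
    f (u t x) - ν * iteratedDeriv 1 (u t) x ≤ M := by
  have key : ∀ ε > 0, f (u t x) - ν * iteratedDeriv 1 (u t) x - ε * t ≤ M := by
    intro ε hε
    refine max_principle (Z := fun t x => f (u t x) - ν * iteratedDeriv 1 (u t) x - ε * t)
      (T := t) ht ?_ ?_ (by simpa using hM) ?_ x
    · have h0 : ContinuousOn (fun q : ℝ × ℝ => u q.1 q.2) HS := h.hu.continuousOn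
      have h1 := h.hf.continuous.comp_continuousOn h0
      exact (h1.sub ((sol_cont_iter h 1).const_mul ν)).sub (by fun_prop)
    · intro s _ y
      simp only [sol_per h 1 s y, h.hper s y]
    · intro s hs y _ h1 h2
      have hg : ∀ y, HasDerivAt (fun x => f (u s x) - ν * iteratedDeriv 1 (u s) x - ε * s)
          (-(ν * iteratedDeriv 2 (u s) y - deriv f (u s y) * iteratedDeriv 1 (u s) y)) y := by
        intro y
        have h0 := sol_x_hasDerivAt h 0 hs.le y
        rw [iteratedDeriv_zero] at h0
        have e : -(ν * iteratedDeriv 2 (u s) y - deriv f (u s y) * iteratedDeriv 1 (u s) y) =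
          deriv f (u s y) * iteratedDeriv 1 (u s) y - ν * iteratedDeriv 2 (u s) y := by ring
        rw [e]
        exact (((f_deriv h (u s y)).comp y h0).sub
          ((sol_x_hasDerivAt h 1 hs.le y).const_mul ν)).sub_const (ε * s)
      have e1 := funext fun y => (hg y).deriv
      rw [e1] at h1 h2
      rw [(ut_x h hs.le y).fun_neg.deriv] at h2
      refine ⟨_, ?_, (((f_deriv h (u s y)).comp s (sol_ut h hs y)).sub
        ((sol_uxt h hs y).const_mul ν)).sub ((hasDerivAt_id s).const_mul ε)⟩
      have h3 := mul_le_mul_of_nonneg_left h2 h.hν.le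
      have h4 : ν * iteratedDeriv 2 (u s) y - deriv f (u s y) * iteratedDeriv 1 (u s) y = 0 := by
        linarith
      rw [h4]
      linarith
  by_contra! hc
  rcases eq_or_lt_of_le ht with h0 | h0
  · have := key 1 one_pos
    rw [← h0] at this hc
    linarith
  · have := key ((f (u t x) - ν * iteratedDeriv 1 (u t) x - M) / (2 * t)) (by
      apply div_pos <;> linarith)
    have e : (f (u t x) - ν * iteratedDeriv 1 (u t) x - M) / (2 * t) * t =
      (f (u t x) - ν * iteratedDeriv 1 (u t) x - M) / 2 := by field_simp
    rw [e] at this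
    linarith
end Sol

open MeasureTheory Set
open scoped ENNReal

lemma contOn_max {G : ℝ → ℝ → ℝ} (hG : ContinuousOn (fun q : ℝ × ℝ => G q.1 q.2) HS) :
    Continuous (Function.uncurry fun t x => G (max t 0) x) := by
  have : ContinuousOn ((fun q : ℝ × ℝ => G q.1 q.2) ∘ fun q : ℝ × ℝ => (max q.1 0, q.2)) univ :=
    hG.comp (by fun_prop) (fun q _ => HS_mem (le_max_right _ _) _)
  exact continuousOn_univ.1 this

lemma contOn_t {G : ℝ → ℝ → ℝ} (hG : ContinuousOn (fun q : ℝ × ℝ => G q.1 q.2) HS) (x : ℝ) :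
    ContinuousOn (fun t => G t x) (Ici 0) := by
  have : ContinuousOn ((fun q : ℝ × ℝ => G q.1 q.2) ∘ fun t : ℝ => (t, x)) (Ici 0) :=
    hG.comp (by fun_prop) (fun q hq => HS_mem hq _)
  exact this

lemma cont_x {G : ℝ → ℝ → ℝ} (hG : ContinuousOn (fun q : ℝ × ℝ => G q.1 q.2) HS) {t : ℝ}
    (ht : 0 ≤ t) : Continuous (G t) := by
  have : ContinuousOn ((fun q : ℝ × ℝ => G q.1 q.2) ∘ fun x : ℝ => (t, x)) univ :=
    hG.comp (by fun_prop) (fun q _ => HS_mem ht _)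
  exact continuousOn_univ.1 this

lemma int_contOn {G : ℝ → ℝ → ℝ} (hG : ContinuousOn (fun q : ℝ × ℝ => G q.1 q.2) HS) :
    ContinuousOn (fun t => ∫ x in (0:ℝ)..1, G t x) (Ici 0) := by
  have h1 := intervalIntegral.continuous_parametric_intervalIntegral_of_continuous'
    (μ := volume) (contOn_max hG) 0 1
  refine h1.continuousOn.congr ?_
  intro t ht
  simp only [max_eq_left (mem_Ici.1 ht)]

lemma int_swap {G : ℝ → ℝ → ℝ} (hG : ContinuousOn (fun q : ℝ × ℝ => G q.1 q.2) HS)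
    {s T : ℝ} (hs : 0 ≤ s) (hT : s ≤ T) :
    ∫ t in s..T, ∫ x in (0:ℝ)..1, G t x = ∫ x in (0:ℝ)..1, ∫ t in s..T, G t x := by
  apply intervalIntegral_intervalIntegral_swap
  have hK : IsCompact (Icc s T ×ˢ Icc (0:ℝ) 1) := isCompact_Icc.prod isCompact_Icc
  have h1 : ContinuousOn (Function.uncurry G) (Icc s T ×ˢ Icc (0:ℝ) 1) :=
    hG.mono (prod_mono (fun t ht => hs.trans ht.1) (subset_univ _))
  refine (h1.integrableOn_compact hK).mono_set ?_
  rw [uIoc_of_le hT, uIoc_of_le zero_le_one]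
  exact prod_mono Ioc_subset_Icc_self Ioc_subset_Icc_self

section Sol
variable {f : ℝ → ℝ} {σ ν : ℝ} {u : ℝ → ℝ → ℝ}

lemma sol_cont0 (h : IsBurgersSolution f σ ν u) :
    ContinuousOn (fun q : ℝ × ℝ => u q.1 q.2) HS := h.hu.continuousOn

lemma sol_x0 (h : IsBurgersSolution f σ ν u) {t : ℝ} (ht : 0 ≤ t) (x : ℝ) :
    HasDerivAt (u t) (iteratedDeriv 1 (u t) x) x := by
  have := sol_x_hasDerivAt h 0 ht x
  rwa [iteratedDeriv_zero] at this

lemma sol_cont_iter_x (h : IsBurgersSolution f σ ν u) (k : ℕ) {t : ℝ} (ht : 0 ≤ t) :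
    Continuous (iteratedDeriv k (u t)) :=
  cont_x (G := fun t => iteratedDeriv k (u t)) (sol_cont_iter h k) ht

lemma sol_cont_df (h : IsBurgersSolution f σ ν u) : Continuous (deriv f) :=
  h.hf.continuous_deriv (by simp)

/-- The spatial part of the energy balance. -/
lemma energy_x (h : IsBurgersSolution f σ ν u) {t : ℝ} (ht : 0 ≤ t) :
    ∫ x in (0:ℝ)..1, 2 * u t x * (ν * iteratedDeriv 2 (u t) x
      - deriv f (u t x) * iteratedDeriv 1 (u t) x)
      = - (2 * ν) * ∫ x in (0:ℝ)..1, (iteratedDeriv 1 (u t) x) ^ 2 := by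
  have hg : Continuous (fun y => y * deriv f y) := continuous_id.mul (sol_cont_df h)
  set H : ℝ → ℝ := fun y => ∫ s in (0:ℝ)..y, s * deriv f s with hH
  have hHd : ∀ y, HasDerivAt H (y * deriv f y) y := fun y =>
    intervalIntegral.integral_hasDerivAt_right (hg.intervalIntegrable _ _)
      (hg.stronglyMeasurableAtFilter _ _) hg.continuousAt
  have c0 : Continuous (u t) := cont_x (sol_cont0 h) ht
  have c1 := sol_cont_iter_x h 1 ht
  have c2 := sol_cont_iter_x h 2 ht
  have cf : Continuous (fun x => deriv f (u t x)) := (sol_cont_df h).comp c0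
  have hd : ∀ x, HasDerivAt (fun x => 2 * ν * (u t x * iteratedDeriv 1 (u t) x) - 2 * H (u t x))
      (2 * u t x * (ν * iteratedDeriv 2 (u t) x - deriv f (u t x) * iteratedDeriv 1 (u t) x)
        + (2 * ν) * (iteratedDeriv 1 (u t) x) ^ 2) x := by
    intro x
    have h0 := sol_x0 h ht x
    have h1 := sol_x_hasDerivAt h 1 ht x
    have h2 := ((h0.mul h1).const_mul (2 * ν)).sub (((hHd (u t x)).comp x h0).const_mul 2)
    have e : (2 * u t x * (ν * iteratedDeriv 2 (u t) x - deriv f (u t x) * iteratedDeriv 1 (u t) x)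
        + (2 * ν) * (iteratedDeriv 1 (u t) x) ^ 2) =
        2 * ν * (iteratedDeriv 1 (u t) x * iteratedDeriv 1 (u t) x
          + u t x * iteratedDeriv 2 (u t) x) -
        2 * (u t x * deriv f (u t x) * iteratedDeriv 1 (u t) x) := by ring
    rw [e]
    exact h2
  have key := intervalIntegral.integral_eq_sub_of_hasDerivAt (a := 0) (b := 1)
    (fun x _ => hd x) (Continuous.intervalIntegrable (by fun_prop) _ _)
  have p0 : u t 1 = u t 0 := by simpa using h.hper t 0
  have p1 : iteratedDeriv 1 (u t) 1 = iteratedDeriv 1 (u t) 0 := by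
    simpa using sol_per h 1 t 0
  rw [p0, p1, sub_self, intervalIntegral.integral_add
    (Continuous.intervalIntegrable (by fun_prop) _ _)
    (Continuous.intervalIntegrable (by fun_prop) _ _),
    intervalIntegral.integral_const_mul] at key
  linarith

lemma energy (h : IsBurgersSolution f σ ν u) {s T : ℝ} (hs : 0 ≤ s) (hT : s ≤ T) :
    (∫ x in (0:ℝ)..1, (u s x) ^ 2) - (∫ x in (0:ℝ)..1, (u T x) ^ 2) =
      2 * ν * ∫ t in s..T, ∫ x in (0:ℝ)..1, (iteratedDeriv 1 (u t) x) ^ 2 := by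
  set G : ℝ → ℝ → ℝ := fun t x => 2 * u t x * (ν * iteratedDeriv 2 (u t) x
      - deriv f (u t x) * iteratedDeriv 1 (u t) x) with hGdef
  have c0 := sol_cont0 h
  have hG : ContinuousOn (fun q : ℝ × ℝ => G q.1 q.2) HS := by
    have c1 := sol_cont_iter h 1
    have c2 := sol_cont_iter h 2
    have cf := (sol_cont_df h).comp_continuousOn c0
    exact (c0.const_mul 2).mul ((c2.const_mul ν).sub (cf.mul c1))
  have h1 : ∀ x, ∫ t in s..T, G t x = u T x ^ 2 - u s x ^ 2 := by
    intro x
    have hsub : Icc s T ⊆ Ici 0 := fun t ht => hs.trans ht.1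
    refine intervalIntegral.integral_eq_sub_of_hasDerivAt_of_le (f := fun t => u t x ^ 2) hT
      (((contOn_t c0 x).mono hsub).pow 2) ?_ ?_
    · intro t ht
      have := (sol_ut h (hs.trans_lt ht.1) x).fun_pow 2
      simpa [hGdef] using this
    · apply ContinuousOn.intervalIntegrable
      rw [uIcc_of_le hT]
      exact (contOn_t hG x).mono hsub
  have h2 := int_swap hG hs hT
  simp only [h1] at h2
  have ci : ∀ t, 0 ≤ t → Continuous (fun x => u t x ^ 2) := fun t ht => (cont_x c0 ht).pow 2
  rw [intervalIntegral.integral_sub ((ci T (hs.trans hT)).intervalIntegrable _ _)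
    ((ci s hs).intervalIntegrable _ _)] at h2
  have h3 : ∫ t in s..T, ∫ x in (0:ℝ)..1, G t x =
      ∫ t in s..T, - (2 * ν) * ∫ x in (0:ℝ)..1, (iteratedDeriv 1 (u t) x) ^ 2 := by
    apply intervalIntegral.integral_congr
    intro t ht
    rw [uIcc_of_le hT] at ht
    exact energy_x h (hs.trans ht.1)
  rw [h3, intervalIntegral.integral_const_mul] at h2
  linarith

lemma exists_zero_of_int {v : ℝ → ℝ} (hv : Continuous v) (hi : ∫ x in (0:ℝ)..1, v x = 0) :
    ∃ y ∈ Icc (0:ℝ) 1, v y = 0 := by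
  have hd : ∀ y, HasDerivAt (fun y => ∫ s in (0:ℝ)..y, v s) (v y) y := fun y =>
    intervalIntegral.integral_hasDerivAt_right (hv.intervalIntegrable _ _)
      (hv.stronglyMeasurableAtFilter _ _) hv.continuousAt
  obtain ⟨y, hy, h0⟩ := exists_hasDerivAt_eq_zero (f := fun y => ∫ s in (0:ℝ)..y, v s)
    (f' := v) zero_lt_one
    (fun x _ => (hd x).continuousAt.continuousWithinAt) (by simp [hi]) (fun x _ => hd x)
  exact ⟨y, Ioo_subset_Icc_self hy, h0⟩

lemma sol_mean (h : IsBurgersSolution f σ ν u) {t : ℝ} (ht : 0 ≤ t) :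
    ∫ x in (0:ℝ)..1, u t x = 0 := by
  rw [intervalIntegral.integral_of_le zero_le_one]; exact h.hmean t ht

lemma sol_abs_le (h : IsBurgersSolution f σ ν u) {t : ℝ} (ht : 0 < t) {x : ℝ}
    (hx : x ∈ Icc (0:ℝ) 1) : |u t x| ≤ (σ * t)⁻¹ := by
  have hR : 0 < (σ * t)⁻¹ := inv_pos.2 (mul_pos h.hσ ht)
  obtain ⟨y, hy, hy0⟩ := exists_zero_of_int (cont_x (sol_cont0 h) ht.le) (sol_mean h ht.le)
  have hdiff : Differentiable ℝ (u t) := fun x => (sol_x0 h ht.le x).differentiableAt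
  have hle : ∀ x y, x ≤ y → u t y - u t x ≤ (σ * t)⁻¹ * (y - x) := fun x y hxy =>
    image_sub_le_mul_sub_of_deriv_le hdiff
      (fun x => by rw [(sol_x0 h ht.le x).deriv]; exact oleinik h ht x) hxy
  have p1 : u t (y + 1) = 0 := by rw [h.hper, hy0]
  have p2 : u t (y - 1) = 0 := by have := h.hper t (y - 1); simpa [hy0] using this.symm
  obtain ⟨hx0, hx1⟩ := hx
  obtain ⟨hy1, hy2⟩ := hy
  rw [abs_le]
  constructor
  · rcases le_total x y with hxy | hxy
    · have := hle x y hxy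
      have h2 : (σ * t)⁻¹ * (y - x) ≤ (σ * t)⁻¹ * 1 := by gcongr; linarith
      linarith
    · have := hle x (y + 1) (by linarith)
      have h2 : (σ * t)⁻¹ * (y + 1 - x) ≤ (σ * t)⁻¹ * 1 := by gcongr; linarith
      linarith
  · rcases le_total y x with hxy | hxy
    · have := hle y x hxy
      have h2 : (σ * t)⁻¹ * (x - y) ≤ (σ * t)⁻¹ * 1 := by gcongr; linarith
      linarith
    · have := hle (y - 1) x (by linarith)
      have h2 : (σ * t)⁻¹ * (x - (y - 1)) ≤ (σ * t)⁻¹ * 1 := by gcongr; linarith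
      linarith

lemma sol_int_ux (h : IsBurgersSolution f σ ν u) {t : ℝ} (ht : 0 ≤ t) (k : ℕ) :
    ∫ x in (0:ℝ)..1, iteratedDeriv (k+1) (u t) x = 0 := by
  rw [intervalIntegral.integral_eq_sub_of_hasDerivAt (fun x _ => sol_x_hasDerivAt h k ht x)
    ((sol_cont_iter_x h (k+1) ht).intervalIntegrable _ _)]
  have := sol_per h k t 0
  simp only [zero_add] at this
  rw [this, sub_self]

lemma sol_ux_L1 (h : IsBurgersSolution f σ ν u) {t : ℝ} (ht : 0 < t) :
    ∫ x in (0:ℝ)..1, |iteratedDeriv 1 (u t) x| ≤ 2 * (σ * t)⁻¹ := by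
  have c1 := sol_cont_iter_x h 1 ht.le
  have hR : 0 < (σ * t)⁻¹ := inv_pos.2 (mul_pos h.hσ ht)
  have h1 : ∫ x in (0:ℝ)..1, |iteratedDeriv 1 (u t) x| ≤
      ∫ x in (0:ℝ)..1, (2 * (σ * t)⁻¹ - iteratedDeriv 1 (u t) x) := by
    apply intervalIntegral.integral_mono_on zero_le_one
      (c1.abs.intervalIntegrable _ _) (Continuous.intervalIntegrable (by fun_prop) _ _)
    intro x _
    have := oleinik h ht x
    rw [abs_le]
    constructor <;> linarith
  rw [intervalIntegral.integral_sub (by simp) (c1.intervalIntegrable _ _),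
    sol_int_ux h ht.le 0] at h1
  simpa using h1

end Sol

open MeasureTheory Set
open scoped ENNReal

lemma memLp_of_cont {g : ℝ → ℝ} (hg : Continuous g) (p : ℝ≥0∞) :
    MemLp g p (volume.restrict (Ioc (0:ℝ) 1)) := by
  obtain ⟨C, hC⟩ := isCompact_Icc.exists_bound_of_continuousOn (s := Icc (0:ℝ) 1) hg.continuousOn
  refine MemLp.of_bound hg.aestronglyMeasurable C ?_
  filter_upwards [ae_restrict_mem measurableSet_Ioc] with x hx
  exact hC x (Ioc_subset_Icc_self hx)

lemma eLpNorm_one_cont {g : ℝ → ℝ} (hg : Continuous g) :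
    (eLpNorm g 1 (volume.restrict (Ioc (0:ℝ) 1))).toReal = ∫ x in (0:ℝ)..1, |g x| := by
  rw [intervalIntegral.integral_of_le zero_le_one, eLpNorm_one_eq_lintegral_enorm,
    ← integral_norm_eq_lintegral_enorm hg.aestronglyMeasurable]
  rfl

lemma eLpNorm_two_cont {g : ℝ → ℝ} (hg : Continuous g) :
    (eLpNorm g 2 (volume.restrict (Ioc (0:ℝ) 1))).toReal ^ 2 = ∫ x in (0:ℝ)..1, g x ^ 2 := by
  rw [intervalIntegral.integral_of_le zero_le_one,
    (memLp_of_cont hg 2).eLpNorm_eq_integral_rpow_norm (by simp) (by simp)]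
  have h0 : 0 ≤ ∫ x in Ioc (0:ℝ) 1, g x ^ 2 := integral_nonneg fun x => sq_nonneg _
  rw [ENNReal.toReal_ofReal (by positivity)]
  simp only [ENNReal.toReal_ofNat, Real.norm_eq_abs]
  have e : ∀ x, |g x| ^ (2:ℝ) = g x ^ 2 := fun x => by
    rw [Real.rpow_ofNat, sq_abs]
  simp only [e]
  rw [← Real.rpow_natCast, ← Real.rpow_mul h0]
  norm_num

lemma le_eLpNorm_top_cont {g : ℝ → ℝ} (hg : Continuous g) {x : ℝ} (hx : x ∈ Icc (0:ℝ) 1) :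
    |g x| ≤ (eLpNorm g ⊤ (volume.restrict (Ioc (0:ℝ) 1))).toReal := by
  set M := (eLpNorm g ⊤ (volume.restrict (Ioc (0:ℝ) 1))).toReal with hM
  have hfin := (memLp_of_cont hg ⊤).eLpNorm_ne_top
  have hae : ∀ᵐ y ∂(volume.restrict (Ioc (0:ℝ) 1)), |g y| ≤ M := by
    have := ae_le_eLpNormEssSup (f := g) (μ := volume.restrict (Ioc (0:ℝ) 1))
    filter_upwards [this] with y hy
    rw [← eLpNorm_exponent_top] at hy
    have := ENNReal.toReal_mono hfin hy
    rw [toReal_enorm] at this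
    exact this
  have hopen : IsOpen (Ioo (0:ℝ) 1 ∩ {y | M < |g y|}) :=
    isOpen_Ioo.inter (isOpen_lt continuous_const hg.abs)
  have hz : volume (Ioo (0:ℝ) 1 ∩ {y | M < |g y|}) = 0 := by
    rw [ae_restrict_iff' measurableSet_Ioc] at hae
    refine measure_mono_null ?_ hae
    intro y hy h
    have := h (Ioo_subset_Ioc_self hy.1)
    have h2 := hy.2
    change M < |g y| at h2
    linarith
  have hemp := (hopen.measure_eq_zero_iff volume).1 hz
  have hle : ∀ y ∈ Ioo (0:ℝ) 1, |g y| ≤ M := by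
    intro y hy
    by_contra! h
    have : y ∈ Ioo (0:ℝ) 1 ∩ {y | M < |g y|} := ⟨hy, h⟩
    rw [hemp] at this
    exact this
  have hcl : x ∈ closure (Ioo (0:ℝ) 1) := by rwa [closure_Ioo (by norm_num)]
  exact le_on_closure hle hg.abs.continuousOn continuousOn_const hcl

/-- Hölder on a subinterval. -/
lemma int_le_eLpNorm {g : ℝ → ℝ} (hg : Continuous g) {p : ℝ≥0∞} (hp : 1 ≤ p) {a h : ℝ}
    (ha : 0 ≤ a) (hh : 0 < h) (hah : a + h ≤ 1) :
    ∫ x in a..(a+h), |g x| ≤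
      h ^ (1 - (1 / p).toReal) * (eLpNorm g p (volume.restrict (Ioc (0:ℝ) 1))).toReal := by
  have hle : a ≤ a + h := by linarith
  set μ := volume.restrict (Ioc a (a+h)) with hμ
  have hμle : μ ≤ volume.restrict (Ioc (0:ℝ) 1) :=
    Measure.restrict_mono (Ioc_subset_Ioc ha hah) le_rfl
  have e1 : ∫ x in a..(a+h), |g x| = (eLpNorm g 1 μ).toReal := by
    rw [intervalIntegral.integral_of_le hle, eLpNorm_one_eq_lintegral_enorm,
      ← integral_norm_eq_lintegral_enorm hg.aestronglyMeasurable]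
    rfl
  have hfin := (memLp_of_cont hg p).eLpNorm_ne_top
  have h1 := eLpNorm_le_eLpNorm_mul_rpow_measure_univ (μ := μ) hp hg.aestronglyMeasurable
  have huniv : μ univ = ENNReal.ofReal h := by simp [hμ]
  rw [huniv] at h1
  have h2 : eLpNorm g 1 μ ≤ eLpNorm g p (volume.restrict (Ioc (0:ℝ) 1)) *
      ENNReal.ofReal h ^ (1 / (1:ℝ≥0∞).toReal - 1 / p.toReal) := by
    refine h1.trans ?_
    gcongr
  have hfin2 : ENNReal.ofReal h ^ (1 / (1:ℝ≥0∞).toReal - 1 / p.toReal) ≠ ⊤ :=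
    by simp [ENNReal.rpow_eq_top_iff, not_le.2 hh]
  have h3 := ENNReal.toReal_mono (ENNReal.mul_ne_top hfin hfin2) h2
  rw [e1]
  refine h3.trans (le_of_eq ?_)
  rw [ENNReal.toReal_mul, ← ENNReal.toReal_rpow, ENNReal.toReal_ofReal hh.le, mul_comm]
  simp

lemma exists_small (j : ℕ) : ∃ C > 0, ∀ g : ℕ → ℝ → ℝ,
    (∀ k x, HasDerivAt (g k) (g (k+1) x) x) → ∀ a h : ℝ, 0 < h →
    ∃ z ∈ Icc a (a+h), |g j z| * h ^ (j+1) ≤ C * ∫ x in a..(a+h), |g 0 x| := by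
  induction j with
  | zero =>
    refine ⟨1, one_pos, fun g hg a h hh => ?_⟩
    have hc : Continuous (g 0) := continuous_iff_continuousAt.2 fun x => (hg 0 x).continuousAt
    obtain ⟨z, hz, hmin⟩ := isCompact_Icc.exists_isMinOn (s := Icc a (a+h))
      ⟨a, by simpa using hh.le⟩ hc.abs.continuousOn
    refine ⟨z, hz, ?_⟩
    have : ∫ x in a..(a+h), |g 0 z| ≤ ∫ x in a..(a+h), |g 0 x| :=
      intervalIntegral.integral_mono_on (by linarith) (by simp) (hc.abs.intervalIntegrable _ _)
        (fun x hx => hmin hx)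
    simp at this
    simp
    linarith
  | succ j ih =>
    obtain ⟨C, hC, ih⟩ := ih
    refine ⟨2 * C * 3 ^ (j+2), by positivity, fun g hg a h hh => ?_⟩
    have hc : Continuous (g 0) := continuous_iff_continuousAt.2 fun x => (hg 0 x).continuousAt
    have hii : ∀ a b, IntervalIntegrable (fun x => |g 0 x|) volume a b :=
      fun a b => hc.abs.intervalIntegrable _ _
    have hnn : ∀ a b, a ≤ b → 0 ≤ ∫ x in a..b, |g 0 x| := fun a b hab =>
      intervalIntegral.integral_nonneg hab fun x _ => abs_nonneg _
    obtain ⟨z1, hz1, h1⟩ := ih g hg a (h/3) (by positivity)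
    obtain ⟨z2, hz2, h2⟩ := ih g hg (a + 2*h/3) (h/3) (by positivity)
    have ee : a + 2 * h / 3 + h / 3 = a + h := by ring
    rw [ee] at h2 hz2
    set A := ∫ x in a..(a+h), |g 0 x| with hA
    have hsum1 := intervalIntegral.integral_add_adjacent_intervals (hii a (a+h/3)) (hii (a+h/3) (a+h))
    have hsum2 := intervalIntegral.integral_add_adjacent_intervals
      (hii a (a+2*h/3)) (hii (a+2*h/3) (a+h))
    have n1 := hnn (a+h/3) (a+h) (by linarith)
    have n2 := hnn a (a+2*h/3) (by linarith)
    have b1 : |g j z1| * (h/3)^(j+1) ≤ C * A := h1.trans (by gcongr; linarith)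
    have b2 : |g j z2| * (h/3)^(j+1) ≤ C * A := h2.trans (by gcongr; linarith)
    have hz : h/3 ≤ z2 - z1 := by linarith [hz1.2, hz2.1]
    obtain ⟨z, hzm, hzs⟩ := exists_hasDerivAt_eq_slope (g j) (g (j+1)) (a := z1) (b := z2)
      (by linarith) (fun x _ => (hg j x).continuousAt.continuousWithinAt) (fun x _ => hg j x)
    refine ⟨z, ⟨by linarith [hz1.1, hzm.1], by linarith [hz2.2, hzm.2]⟩, ?_⟩
    have hpos : 0 < z2 - z1 := by linarith
    have h3 : |g (j+1) z| * (h/3) ≤ |g j z1| + |g j z2| := by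
      calc |g (j+1) z| * (h/3) ≤ |g (j+1) z| * (z2 - z1) := by gcongr
        _ = |g j z2 - g j z1| := by
          rw [hzs, abs_div, abs_of_pos hpos]; field_simp
        _ ≤ |g j z2| + |g j z1| := abs_sub _ _
        _ = _ := add_comm _ _
    have h4 : |g (j+1) z| * (h/3) * (h/3)^(j+1) ≤ 2 * C * A := by
      calc _ ≤ (|g j z1| + |g j z2|) * (h/3)^(j+1) := by gcongr
        _ = |g j z1| * (h/3)^(j+1) + |g j z2| * (h/3)^(j+1) := by ring
        _ ≤ _ := by linarith
    have h5 : |g (j+1) z| * h^(j+1+1) = (|g (j+1) z| * (h/3) * (h/3)^(j+1)) * 3^(j+2) := by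
      rw [div_pow, pow_succ h (j+1), pow_succ 3 (j+1)]; field_simp
    rw [h5]
    calc _ ≤ (2 * C * A) * 3^(j+2) := by gcongr
      _ = _ := by ring

lemma interp (k : ℕ) : ∀ (g : ℕ → ℝ → ℝ) (_ : ∀ k x, HasDerivAt (g k) (g (k+1) x) x)
    (a h : ℝ) (_ : 0 < h) (q : ℕ → ℝ)
    (_ : ∀ j < k+1, ∃ z ∈ Icc a (a+h), |g j z| ≤ q j), ∀ x ∈ Icc a (a+h),
    |g 0 x| ≤ (∑ j ∈ Finset.range (k+1), q j * h^j) + h^k * ∫ x in a..(a+h), |g (k+1) x| := by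
  induction k with
  | zero =>
    intro g hg a h hh q hq x hx
    have hc : Continuous (g 1) := continuous_iff_continuousAt.2 fun x => (hg 1 x).continuousAt
    obtain ⟨z, hz, hzq⟩ := hq 0 (by simp)
    have h1 := intervalIntegral.integral_eq_sub_of_hasDerivAt (f := g 0) (f' := g 1) (a := z) (b := x)
      (fun x _ => hg 0 x) (hc.intervalIntegrable _ _)
    have h2 : |∫ y in z..x, g 1 y| ≤ ∫ y in a..(a+h), |g 1 y| := by
      refine (intervalIntegral.norm_integral_le_integral_norm_uIoc (f := g 1) (a := z) (b := x)
        (μ := volume)).trans ?_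
      rw [intervalIntegral.integral_of_le (by linarith)]
      apply setIntegral_mono_set
      · exact (hc.abs.integrableOn_Icc (a := a) (b := a+h)).mono_set Ioc_subset_Icc_self
      · exact Filter.Eventually.of_forall fun y => abs_nonneg _
      · apply LE.le.eventuallyLE
        exact Ioc_subset_Ioc (le_min hz.1 hx.1) (max_le hz.2 hx.2)
    have h3 : g 0 x = g 0 z + ∫ y in z..x, g 1 y := by
      rw [h1]; ring
    have h4 : |g 0 x| ≤ |g 0 z| + |∫ y in z..x, g 1 y| := by
      rw [h3]; exact abs_add_le _ _
    simp
    linarith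
  | succ k ih =>
    intro g hg a h hh q hq x hx
    have h1 := ih (fun j => g (j+1)) (fun j x => hg (j+1) x) a h hh (fun j => q (j+1))
      (fun j hj => hq (j+1) (by omega))
    obtain ⟨z, hz, hzq⟩ := hq 0 (by simp)
    simp only [zero_add] at h1
    set Y := (∑ j ∈ Finset.range (k+1), q (j+1) * h^j) + h^k * ∫ x in a..(a+h), |g (k+1+1) x| with hY
    have h2 : ‖g 0 x - g 0 z‖ ≤ Y * ‖x - z‖ :=
      (convex_Icc a (a+h)).norm_image_sub_le_of_norm_hasDerivWithin_le
        (f := g 0) (f' := g 1) (fun y _ => (hg 0 y).hasDerivWithinAt) (fun y hy => h1 y hy) hz hx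
    have hY0 : 0 ≤ Y := (abs_nonneg _).trans (h1 x hx)
    have hxz : ‖x - z‖ ≤ h := by
      rw [Real.norm_eq_abs, abs_le]
      constructor <;> linarith [hx.1, hx.2, hz.1, hz.2]
    have h3 : |g 0 x - g 0 z| ≤ Y * h := h2.trans (by gcongr)
    have h4 : |g 0 x| ≤ |g 0 z| + |g 0 x - g 0 z| := by
      have := abs_add_le (g 0 z) (g 0 x - g 0 z)
      simpa using this
    rw [Finset.sum_range_succ']
    have e : (∑ j ∈ Finset.range (k+1), q (j+1) * h^(j+1)) =
        (∑ j ∈ Finset.range (k+1), q (j+1) * h^j) * h := by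
      rw [Finset.sum_mul]
      exact Finset.sum_congr rfl fun j _ => by ring
    rw [e]
    have : Y * h = (∑ j ∈ Finset.range (k+1), q (j+1) * h^j) * h +
      h^(k+1) * ∫ x in a..(a+h), |g (k+1+1) x| := by rw [hY]; ring
    simp only [pow_zero, mul_one]
    linarith

lemma inv_p_le_one {p : ℝ≥0∞} (hp : 1 ≤ p) : (1 / p).toReal ≤ 1 := by
  have : 1 / p ≤ 1 := by simpa using hp
  simpa using ENNReal.toReal_mono (by simp) this

/-- Lower bound for high derivatives. -/
lemma hi_lower (k : ℕ) {p : ℝ≥0∞} (hp : 1 ≤ p) {l B : ℝ} (hl : 0 < l) (hB : 0 < B) :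
    ∃ c > 0, ∀ g : ℕ → ℝ → ℝ, (∀ k x, HasDerivAt (g k) (g (k+1) x) x) → ∀ ν : ℝ, 0 < ν →
      (∃ x ∈ Icc (0:ℝ) 1, l / ν ≤ |g 0 x|) → (∫ x in (0:ℝ)..1, |g 0 x|) ≤ B →
      (∀ j, ∃ z ∈ Icc (0:ℝ) 1, g j z = 0) →
      c * ν ^ (-((k:ℝ) + 2 - (1 / p).toReal)) ≤
        (eLpNorm (g (k+1)) p (volume.restrict (Ioc (0:ℝ) 1))).toReal := by
  choose C hC hQ using exists_small
  set r := (1 / p).toReal with hr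
  have hr1 : r ≤ 1 := inv_p_le_one hp
  set Cs := ∑ j ∈ Finset.range (k+1), C j with hCs
  have hCspos : 0 < Cs := Finset.sum_pos (fun j _ => hC j) (by simp)
  set K := 2 * Cs * B / l with hK
  have hKpos : 0 < K := by positivity
  have hkr : 0 ≤ (k:ℝ) + 1 - r := by
    have : (0:ℝ) ≤ k := Nat.cast_nonneg k
    linarith
  refine ⟨l / 2 * K ^ (-((k:ℝ) + 1 - r)), by positivity, ?_⟩
  intro g hg ν hν ⟨x, hx, hxl⟩ hgB hzero
  have hcont : ∀ j, Continuous (g j) := fun j =>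
    continuous_iff_continuousAt.2 fun x => (hg j x).continuousAt
  set N := (eLpNorm (g (k+1)) p (volume.restrict (Ioc (0:ℝ) 1))).toReal with hN
  have hN0 : 0 ≤ N := ENNReal.toReal_nonneg
  have eν : ν ^ (-((k:ℝ) + 2 - r)) = ν⁻¹ * ν ^ (-((k:ℝ) + 1 - r)) := by
    rw [← Real.rpow_neg_one, ← Real.rpow_add hν]; congr 1; ring
  rw [eν]
  have eKν : K ^ (-((k:ℝ) + 1 - r)) * ν ^ (-((k:ℝ) + 1 - r)) = ((K * ν) ^ ((k:ℝ) + 1 - r))⁻¹ := by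
    rw [← Real.mul_rpow hKpos.le hν.le, Real.rpow_neg (by positivity)]
  have eL : l / 2 * K ^ (-((k:ℝ) + 1 - r)) * (ν⁻¹ * ν ^ (-((k:ℝ) + 1 - r))) =
      (l / ν) / 2 * ((K * ν) ^ ((k:ℝ) + 1 - r))⁻¹ := by
    rw [← eKν]; field_simp
  rw [eL]
  rcases le_or_gt (K * ν) 1 with hcase | hcase
  · set h := K * ν with hh
    have hpos : 0 < h := by positivity
    obtain ⟨a, ha0, ha1, hxa⟩ : ∃ a, 0 ≤ a ∧ a + h ≤ 1 ∧ x ∈ Icc a (a+h) := by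
      rcases le_total x (1 - h) with h1 | h1
      · exact ⟨x, hx.1, by linarith, le_rfl, by linarith⟩
      · exact ⟨1 - h, by linarith, by linarith, h1, by linarith [hx.2]⟩
    set A := ∫ x in a..(a+h), |g 0 x| with hA
    have hAB : A ≤ B := by
      refine le_trans ?_ hgB
      apply intervalIntegral.integral_mono_interval ha0 (by linarith) ha1
      · exact Filter.Eventually.of_forall fun y => abs_nonneg _
      · exact (hcont 0).abs.intervalIntegrable _ _
    have h1 := interp k g hg a h hpos (fun j => C j * A / h^(j+1)) (fun j _ => by
      obtain ⟨z, hz, hz1⟩ := hQ j g hg a h hpos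
      exact ⟨z, hz, by rw [le_div_iff₀ (by positivity)]; exact hz1⟩) x hxa
    have e1 : ∑ j ∈ Finset.range (k+1), C j * A / h^(j+1) * h^j = Cs * A / h := by
      rw [hCs, Finset.sum_mul, Finset.sum_div]
      refine Finset.sum_congr rfl fun j _ => ?_
      rw [pow_succ]
      field_simp
    rw [e1] at h1
    have h2 := int_le_eLpNorm (hcont (k+1)) hp ha0 hpos ha1
    have h3 : Cs * A / h ≤ (l / ν) / 2 := by
      calc Cs * A / h ≤ Cs * B / h := by gcongr
        _ = (l / ν) / 2 := by rw [hh, hK]; field_simp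
    have h4 : h^k * ∫ x in a..(a+h), |g (k+1) x| ≤ h ^ ((k:ℝ) + 1 - r) * N := by
      calc _ ≤ h^k * (h ^ (1 - r) * N) := by gcongr
        _ = _ := by
          rw [← mul_assoc, ← Real.rpow_natCast, ← Real.rpow_add hpos]
          congr 2; ring
    have hp' : 0 < h ^ ((k:ℝ) + 1 - r) := Real.rpow_pos_of_pos hpos _
    rw [← div_eq_mul_inv, div_le_iff₀ hp']
    linarith
  · have h1 := interp k g hg 0 1 one_pos (fun _ => 0) (fun j _ => by
      obtain ⟨z, hz, hz0⟩ := hzero j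
      exact ⟨z, by simpa using hz, by simp [hz0]⟩) x (by simpa using hx)
    have h2 := int_le_eLpNorm (hcont (k+1)) hp le_rfl one_pos (by norm_num)
    simp only [one_pow, zero_mul, Finset.sum_const_zero, Real.one_rpow, one_mul, zero_add] at h1 h2
    have h3 : ((K * ν) ^ ((k:ℝ) + 1 - r))⁻¹ ≤ 1 :=
      inv_le_one_of_one_le₀ (Real.one_le_rpow hcase.le hkr)
    have h4 : 0 < l / ν := by positivity
    calc (l / ν) / 2 * ((K * ν) ^ ((k:ℝ) + 1 - r))⁻¹ ≤ (l / ν) / 2 * 1 := by gcongr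
      _ ≤ l / ν := by linarith
      _ ≤ N := by linarith

open MeasureTheory Set
open scoped ENNReal

lemma exists_big {g : ℝ → ℝ} (hg : Continuous g) {ν c1 B : ℝ} (hν : 0 < ν) (hc1 : 0 < c1)
    (hB : 0 < B) (h2 : c1 / ν ≤ ∫ x in (0:ℝ)..1, g x ^ 2) (h1 : ∫ x in (0:ℝ)..1, |g x| ≤ B) :
    ∃ x ∈ Icc (0:ℝ) 1, (c1 / (2 * B)) / ν ≤ |g x| := by
  by_contra! hc
  have h3 : ∫ x in (0:ℝ)..1, g x ^ 2 ≤ ∫ x in (0:ℝ)..1, (c1 / (2 * B)) / ν * |g x| := by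
    apply intervalIntegral.integral_mono_on zero_le_one
      (Continuous.intervalIntegrable (by fun_prop) _ _)
      (Continuous.intervalIntegrable (by fun_prop) _ _)
    intro x hx
    have := hc x hx
    rw [← sq_abs, sq]
    gcongr
  rw [intervalIntegral.integral_const_mul] at h3
  have h4 : (c1 / (2 * B)) / ν * (∫ x in (0:ℝ)..1, |g x|) ≤ (c1 / (2 * B)) / ν * B := by gcongr
  have h5 : (c1 / (2 * B)) / ν * B = (c1 / ν) / 2 := by field_simp
  have h6 : 0 < c1 / ν := by positivity
  linarith

lemma one_lower {g : ℝ → ℝ} (hg : Continuous g) {p : ℝ≥0∞} (hp : 1 ≤ p) {ν c1 B C2 : ℝ}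
    (hν : 0 < ν) (hc1 : 0 < c1)
    (hB : 0 < B) (hC2 : 0 < C2) (h2 : c1 / ν ≤ ∫ x in (0:ℝ)..1, g x ^ 2)
    (h1 : ∫ x in (0:ℝ)..1, |g x| ≤ B) (h3 : ∀ x ∈ Icc (0:ℝ) 1, |g x| ≤ C2 / ν) :
    (c1 / (2 * B)) * (c1 / (2 * C2 ^ 2)) ^ (1 / p).toReal * ν ^ (-(1 - (1 / p).toReal)) ≤
      (eLpNorm g p (volume.restrict (Ioc (0:ℝ) 1))).toReal := by
  set μ := volume.restrict (Ioc (0:ℝ) 1) with hμ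
  set l := c1 / (2 * B) with hl
  have hlpos : 0 < l := by positivity
  set r := (1 / p).toReal with hr
  set E : Set ℝ := {x | l / ν ≤ |g x|} with hE
  have hEm : MeasurableSet E := (isClosed_le continuous_const hg.abs).measurableSet
  rw [intervalIntegral.integral_of_le zero_le_one] at h1 h2
  have i1 : Integrable (fun x => |g x|) μ := (memLp_of_cont hg.abs 1).integrable le_rfl
  have i2 : Integrable (fun x => g x ^ 2) μ := (memLp_of_cont (hg.pow 2) 1).integrable le_rfl
  have i3 : Integrable (E.indicator fun _ => (C2 / ν) ^ 2) μ :=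
    (integrable_const _).indicator hEm
  have h4 : ∫ x, g x ^ 2 ∂μ ≤ ∫ x, (l / ν * |g x| + E.indicator (fun _ => (C2 / ν) ^ 2) x) ∂μ := by
    apply integral_mono_ae i2 ((i1.const_mul _).add i3)
    filter_upwards [ae_restrict_mem measurableSet_Ioc] with x hx
    have hx3 := h3 x (Ioc_subset_Icc_self hx)
    change g x ^ 2 ≤ l / ν * |g x| + E.indicator (fun _ => (C2 / ν) ^ 2) x
    by_cases hxE : x ∈ E
    · rw [indicator_of_mem hxE]
      have : g x ^ 2 ≤ (C2 / ν) ^ 2 := by rw [← sq_abs]; gcongr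
      have : 0 ≤ l / ν * |g x| := by positivity
      linarith
    · rw [indicator_of_notMem hxE]
      have hlt : |g x| < l / ν := not_le.1 hxE
      rw [← sq_abs, sq, add_zero]
      gcongr
  rw [integral_add (i1.const_mul _) i3, integral_const_mul, integral_indicator_const _ hEm] at h4
  have h5 : l / ν * ∫ x, |g x| ∂μ ≤ (c1 / ν) / 2 := by
    calc _ ≤ l / ν * B := by gcongr
      _ = _ := by rw [hl]; field_simp
  have h6 : c1 / (2 * C2 ^ 2) * ν ≤ μ.real E := by
    have : (c1 / ν) / 2 ≤ μ.real E * (C2 / ν) ^ 2 := by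
      simp only [smul_eq_mul] at h4
      linarith
    have h7 : (c1 / ν) / 2 = (c1 / (2 * C2 ^ 2) * ν) * (C2 / ν) ^ 2 := by field_simp
    rw [h7] at this
    exact le_of_mul_le_mul_right this (by positivity)
  have hpos : 0 < c1 / (2 * C2 ^ 2) * ν := by positivity
  have hE0 : μ E ≠ 0 := by
    intro h0
    rw [measureReal_def, h0] at h6
    simp at h6
    linarith
  have h8 : eLpNorm (E.indicator fun _ => l / ν) p μ ≤ eLpNorm g p μ := by
    apply eLpNorm_mono
    intro x
    by_cases hxE : x ∈ E
    · simp only [indicator_of_mem hxE, Real.norm_eq_abs]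
      rw [abs_of_pos (by positivity)]
      exact hxE
    · simp [indicator_of_notMem hxE]
  rw [eLpNorm_indicator_const' hEm hE0 (by positivity)] at h8
  have h9 := ENNReal.toReal_mono (memLp_of_cont hg p).eLpNorm_ne_top h8
  rw [ENNReal.toReal_mul, ← ENNReal.toReal_rpow, toReal_enorm, Real.norm_eq_abs,
    abs_of_pos (by positivity : 0 < l / ν)] at h9
  have er : 1 / p.toReal = r := by rw [hr]; simp
  rw [er] at h9
  refine le_trans ?_ h9
  have hr0 : 0 ≤ r := ENNReal.toReal_nonneg
  have h10 : (c1 / (2 * C2 ^ 2) * ν) ^ r ≤ (μ E).toReal ^ r := Real.rpow_le_rpow hpos.le h6 hr0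
  calc l * (c1 / (2 * C2 ^ 2)) ^ r * ν ^ (-(1 - r)) = l / ν * (c1 / (2 * C2 ^ 2) * ν) ^ r := by
        rw [Real.mul_rpow (by positivity) hν.le]
        have : ν ^ (-(1 - r)) = ν⁻¹ * ν ^ r := by
          rw [← Real.rpow_neg_one, ← Real.rpow_add hν]; congr 1; ring
        rw [this]; field_simp
    _ ≤ _ := by gcongr

lemma sobLp_contOn {W : ℝ → ℝ → ℝ} (hW : ContinuousOn (fun q : ℝ × ℝ => W q.1 q.2) HS)
    {p : ℝ≥0∞} (hp : 1 ≤ p) :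
    ContinuousOn (fun t => (eLpNorm (W t) p (volume.restrict (Ioc (0:ℝ) 1))).toReal) (Ici 0) := by
  set μ := volume.restrict (Ioc (0:ℝ) 1) with hμ
  have hV := contOn_max hW
  set V : ℝ → ℝ → ℝ := fun t x => W (max t 0) x with hVdef
  have hVx : ∀ t, Continuous (V t) := fun t => hV.comp (by fun_prop : Continuous fun x => (t, x))
  have key : Continuous (fun t => (eLpNorm (V t) p μ).toReal) := by
    rw [Metric.continuous_iff]
    intro t0 ε hε
    have hunif : ∀ᶠ t in nhds t0, ∀ x ∈ Icc (0:ℝ) 1, |V t x - V t0 x| < ε / 2 := by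
      have hopen : ∀ x ∈ Icc (0:ℝ) 1, ∀ᶠ z : ℝ × ℝ in nhds (t0, x), |V z.1 z.2 - V t0 z.2| < ε / 2 := by
        intro x _
        have hc : Continuous (fun z : ℝ × ℝ => |V z.1 z.2 - V t0 z.2|) := by
          have h1 : Continuous (fun z : ℝ × ℝ => V z.1 z.2) := hV
          have h2 : Continuous (fun z : ℝ × ℝ => V t0 z.2) := (hVx t0).comp continuous_snd
          exact (h1.sub h2).abs
        have := hc.tendsto (t0, x)
        simp only [sub_self, abs_zero] at this
        exact this.eventually (gt_mem_nhds (by positivity))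
      have := isCompact_Icc.eventually_forall_of_forall_eventually (K := Icc (0:ℝ) 1)
        (x₀ := t0) (P := fun t x => |V t x - V t0 x| < ε / 2) (by
          intro x hx
          exact hopen x hx)
      exact this
    obtain ⟨δ, hδ, hball⟩ := Metric.eventually_nhds_iff.1 hunif
    refine ⟨δ, hδ, fun t ht => ?_⟩
    have hb := hball ht
    have hdiff : ∀ s s', (∀ x ∈ Icc (0:ℝ) 1, |V s x - V s' x| < ε / 2) →
        (eLpNorm (V s) p μ).toReal ≤ (eLpNorm (V s') p μ).toReal + ε / 2 := by
      intro s s' hss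
      have h1 : eLpNorm (V s) p μ ≤ eLpNorm (V s') p μ + eLpNorm (V s - V s') p μ := by
        have := eLpNorm_add_le (μ := μ) (p := p) (f := V s') (g := V s - V s')
          (hVx s').aestronglyMeasurable ((hVx s).sub (hVx s')).aestronglyMeasurable hp
        simpa using this
      have h2 : eLpNorm (V s - V s') p μ ≤ ENNReal.ofReal (ε / 2) := by
        have := eLpNorm_le_of_ae_bound (μ := μ) (p := p) (f := V s - V s') (C := ε / 2) (by
          filter_upwards [ae_restrict_mem measurableSet_Ioc] with x hx
          exact (hss x (Ioc_subset_Icc_self hx)).le)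
        have hu : μ univ = 1 := by simp [hμ]
        rw [hu] at this
        simpa using this
      have hf1 := (memLp_of_cont (hVx s') p).eLpNorm_ne_top
      have h3 := ENNReal.toReal_mono (ENNReal.add_ne_top.2 ⟨hf1, ENNReal.ofReal_ne_top⟩)
        (h1.trans (add_le_add le_rfl h2))
      rwa [ENNReal.toReal_add hf1 ENNReal.ofReal_ne_top, ENNReal.toReal_ofReal (by positivity)] at h3
    have a1 := hdiff t t0 hb
    have a2 := hdiff t0 t (fun x hx => by rw [abs_sub_comm]; exact hb x hx)
    rw [Real.dist_eq, abs_lt]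
    constructor <;> linarith
  refine key.continuousOn.congr ?_
  intro t ht
  simp only [hVdef, max_eq_left (mem_Ici.1 ht)]

lemma time_lower {g A : ℝ → ℝ} {T1 T2 e Ct a : ℝ} (hT : T1 < T2) (hCt : 0 < Ct) (he : 0 < e)
    (ha : 0 ≤ a) (hg : ContinuousOn g (Icc T1 T2)) (hA : ContinuousOn A (Icc T1 T2))
    (hgC : ∀ t ∈ Icc T1 T2, g t ≤ Ct) (hA0 : ∀ t ∈ Icc T1 T2, 0 ≤ A t)
    (hge : e ≤ ∫ t in T1..T2, g t)
    (hgood : ∀ t ∈ Icc T1 T2, e / (2 * (T2 - T1)) ≤ g t → a ≤ A t) :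
    e / (2 * Ct) * a ≤ ∫ t in T1..T2, A t := by
  have hT' : 0 < T2 - T1 := by linarith
  set c1 := e / (2 * (T2 - T1)) with hc1
  have hc1p : 0 < c1 := by positivity
  have ig : IntervalIntegrable g volume T1 T2 := by
    apply ContinuousOn.intervalIntegrable; rwa [uIcc_of_le hT.le]
  have iA : IntervalIntegrable A volume T1 T2 := by
    apply ContinuousOn.intervalIntegrable; rwa [uIcc_of_le hT.le]
  have h1 : ∫ t in T1..T2, a / Ct * (g t - c1) ≤ ∫ t in T1..T2, A t := by
    apply intervalIntegral.integral_mono_on hT.le ((ig.sub (by simp)).const_mul _) iA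
    intro t ht
    rcases le_or_gt c1 (g t) with h | h
    · calc a / Ct * (g t - c1) ≤ a / Ct * Ct := by
            have := hgC t ht
            gcongr; linarith
        _ = a := by field_simp
        _ ≤ A t := hgood t ht h
    · refine le_trans ?_ (hA0 t ht)
      apply mul_nonpos_of_nonneg_of_nonpos (by positivity) (by linarith)
  rw [intervalIntegral.integral_const_mul, intervalIntegral.integral_sub ig (by simp)] at h1
  simp only [intervalIntegral.integral_const, smul_eq_mul] at h1
  have h2 : (T2 - T1) * c1 = e / 2 := by rw [hc1]; field_simp
  rw [h2] at h1
  refine le_trans ?_ h1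
  calc e / (2 * Ct) * a = a / Ct * (e / 2) := by field_simp
    _ ≤ _ := by gcongr; linarith

open MeasureTheory Set
open scoped ENNReal

section Sol
variable {f : ℝ → ℝ} {σ ν : ℝ} {u : ℝ → ℝ → ℝ}

lemma periodic_fract {g : ℝ → ℝ} (hg : Function.Periodic g 1) (y : ℝ) :
    g y = g (Int.fract y) := by
  have := hg.int_mul (⌊y⌋) (Int.fract y)
  rw [← this]; congr 1
  have := Int.fract_add_floor y
  linarith

lemma fract_mem_Icc (y : ℝ) : Int.fract y ∈ Icc (0:ℝ) 1 :=
  ⟨Int.fract_nonneg y, (Int.fract_lt_one y).le⟩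

lemma D_L1 (h : IsBurgersSolution f σ ν u) :
    0 < burgersD u ∧ (burgersD u)⁻¹ ≤ ∫ x in (0:ℝ)..1, |u 0 x| := by
  have c0 : Continuous (u 0) := cont_x (sol_cont0 h) le_rfl
  have e : sobLp 0 1 (u 0) = ∫ x in (0:ℝ)..1, |u 0 x| := by
    unfold sobLp
    rw [iteratedDeriv_zero]
    exact eLpNorm_one_cont c0
  have hpos : 0 < ∫ x in (0:ℝ)..1, |u 0 x| := by
    obtain ⟨x, hx⟩ := h.hinit
    apply intervalIntegral.integral_pos zero_lt_one c0.abs.continuousOn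
      (fun x _ => abs_nonneg _)
    refine ⟨Int.fract x, fract_mem_Icc x, ?_⟩
    rw [← periodic_fract (h.hper 0) x]
    exact abs_pos.2 hx
  have h1 : (sobLp 0 1 (u 0))⁻¹ ≤ burgersD u := le_max_left _ _
  rw [e] at h1
  have h2 : 0 < burgersD u := (inv_pos.2 hpos).trans_le h1
  exact ⟨h2, inv_le_of_inv_le₀ hpos h1⟩

lemma D_ux (h : IsBurgersSolution f σ ν u) (x : ℝ) :
    |iteratedDeriv 1 (u 0) x| ≤ burgersD u := by
  rw [periodic_fract (sol_per h 1 0) x]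
  exact (le_eLpNorm_top_cont (sol_cont_iter_x h 1 le_rfl) (fract_mem_Icc x)).trans
    (le_max_right _ _)

lemma D_u (h : IsBurgersSolution f σ ν u) (x : ℝ) : |u 0 x| ≤ burgersD u := by
  rw [periodic_fract (h.hper 0) x]
  have hx := fract_mem_Icc x
  set y := Int.fract x
  obtain ⟨z, hz, hz0⟩ := exists_zero_of_int (cont_x (sol_cont0 h) le_rfl) (sol_mean h le_rfl)
  have h2 : ‖u 0 y - u 0 z‖ ≤ burgersD u * ‖y - z‖ :=
    convex_univ.norm_image_sub_le_of_norm_hasDerivWithin_le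
      (f := u 0) (f' := iteratedDeriv 1 (u 0))
      (fun y _ => (sol_x0 h le_rfl y).hasDerivWithinAt) (fun y _ => D_ux h y)
      (mem_univ z) (mem_univ y)
  rw [hz0, sub_zero] at h2
  have h3 : ‖y - z‖ ≤ 1 := by
    rw [Real.norm_eq_abs, abs_le]
    constructor <;> linarith [hx.1, hx.2, hz.1, hz.2]
  have := (D_L1 h).1
  calc |u 0 y| ≤ burgersD u * ‖y - z‖ := h2
    _ ≤ burgersD u * 1 := by gcongr
    _ = _ := mul_one _

lemma E0 (h : IsBurgersSolution f σ ν u) :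
    ((burgersD u) ^ 2)⁻¹ ≤ ∫ x in (0:ℝ)..1, u 0 x ^ 2 := by
  have c0 : Continuous (u 0) := cont_x (sol_cont0 h) le_rfl
  obtain ⟨hD, hL⟩ := D_L1 h
  set c := ∫ x in (0:ℝ)..1, |u 0 x| with hc
  have h1 : 0 ≤ ∫ x in (0:ℝ)..1, (|u 0 x| - c) ^ 2 :=
    intervalIntegral.integral_nonneg zero_le_one fun x _ => sq_nonneg _
  have h2 : ∫ x in (0:ℝ)..1, (|u 0 x| - c) ^ 2 =
      ∫ x in (0:ℝ)..1, (u 0 x ^ 2 - (2 * c * |u 0 x| - c ^ 2)) := by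
    congr 1; funext x; rw [sub_sq, sq_abs]; ring
  rw [h2, intervalIntegral.integral_sub (Continuous.intervalIntegrable (by fun_prop) _ _)
    (Continuous.intervalIntegrable (by fun_prop) _ _),
    intervalIntegral.integral_sub (Continuous.intervalIntegrable (by fun_prop) _ _)
    (Continuous.intervalIntegrable (by fun_prop) _ _),
    intervalIntegral.integral_const_mul, ← hc] at h1
  simp at h1
  have h3 : ((burgersD u)⁻¹) ^ 2 ≤ c ^ 2 := by
    have : 0 < (burgersD u)⁻¹ := inv_pos.2 hD
    gcongr
  rw [← inv_pow]
  linarith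

lemma ux_sq_contOn (h : IsBurgersSolution f σ ν u) :
    ContinuousOn (fun t => ∫ x in (0:ℝ)..1, (iteratedDeriv 1 (u t) x) ^ 2) (Ici 0) :=
  int_contOn (G := fun t x => (iteratedDeriv 1 (u t) x) ^ 2) ((sol_cont_iter h 1).pow 2)

lemma E_lower (h : IsBurgersSolution f σ ν u) {Ct : ℝ}
    (hb : ∀ t, 0 ≤ t → sobLp 1 2 (u t) ^ 2 ≤ Ct * ν⁻¹) {T : ℝ} (hT : 0 ≤ T) :
    ((burgersD u) ^ 2)⁻¹ - 2 * Ct * T ≤ ∫ x in (0:ℝ)..1, u T x ^ 2 := by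
  have h1 := energy h le_rfl hT
  have hν := h.hν
  have h2 : ∫ t in (0:ℝ)..T, ∫ x in (0:ℝ)..1, (iteratedDeriv 1 (u t) x) ^ 2 ≤
      ∫ t in (0:ℝ)..T, Ct * ν⁻¹ := by
    apply intervalIntegral.integral_mono_on hT
    · apply ContinuousOn.intervalIntegrable
      rw [uIcc_of_le hT]
      exact (ux_sq_contOn h).mono Icc_subset_Ici_self
    · simp
    · intro t ht
      rw [← eLpNorm_two_cont (sol_cont_iter_x h 1 ht.1)]
      exact hb t ht.1
  simp only [intervalIntegral.integral_const, smul_eq_mul, sub_zero] at h2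
  have h3 : 2 * ν * ∫ t in (0:ℝ)..T, ∫ x in (0:ℝ)..1, (iteratedDeriv 1 (u t) x) ^ 2 ≤
      2 * ν * (T * (Ct * ν⁻¹)) := by gcongr
  have h4 : 2 * ν * (T * (Ct * ν⁻¹)) = 2 * Ct * T := by field_simp
  have := E0 h
  linarith

lemma E_upper (h : IsBurgersSolution f σ ν u) {T : ℝ} (hT : 0 < T) :
    ∫ x in (0:ℝ)..1, u T x ^ 2 ≤ ((σ * T)⁻¹) ^ 2 := by
  have h1 : ∫ x in (0:ℝ)..1, u T x ^ 2 ≤ ∫ x in (0:ℝ)..1, ((σ * T)⁻¹) ^ 2 := by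
    apply intervalIntegral.integral_mono_on zero_le_one
      (((cont_x (sol_cont0 h) hT.le).pow 2).intervalIntegrable _ _) (by simp)
    intro x hx
    have := sol_abs_le h hT hx
    change u T x ^ 2 ≤ ((σ * T)⁻¹) ^ 2
    rw [← sq_abs]
    gcongr
  simpa using h1

lemma L1_lower (h : IsBurgersSolution f σ ν u) {T e R : ℝ} (hT : 0 < T) (hR : 0 < R)
    (hRT : (σ * T)⁻¹ ≤ R) (he : e ≤ ∫ x in (0:ℝ)..1, u T x ^ 2) :
    e / R ≤ ∫ x in (0:ℝ)..1, |u T x| := by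
  have c0 : Continuous (u T) := cont_x (sol_cont0 h) hT.le
  have h1 : ∫ x in (0:ℝ)..1, u T x ^ 2 ≤ ∫ x in (0:ℝ)..1, R * |u T x| := by
    apply intervalIntegral.integral_mono_on zero_le_one
      (Continuous.intervalIntegrable (by fun_prop) _ _)
      (Continuous.intervalIntegrable (by fun_prop) _ _)
    intro x hx
    have := (sol_abs_le h hT hx).trans hRT
    rw [← sq_abs, sq]
    gcongr
  rw [intervalIntegral.integral_const_mul] at h1
  rw [div_le_iff₀ hR]
  linarith

end Sol

/-- uniform bound `|u_x| ≤ C/ν`. -/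
lemma ux_bound {f : ℝ → ℝ} {σ D T1 : ℝ} (hf : ContDiff ℝ (⊤ : ℕ∞) f) (hσ : 0 < σ)
    (hD : 0 < D) (hT1 : 0 < T1) :
    ∃ C > 0, ∀ ν, ν ≤ 1 → ∀ u, IsBurgersSolution f σ ν u → burgersD u = D → ∀ t, T1 ≤ t →
      ∀ x ∈ Icc (0:ℝ) 1, |iteratedDeriv 1 (u t) x| ≤ C / ν := by
  set R := (σ * T1)⁻¹ with hR
  have hRpos : 0 < R := by positivity
  obtain ⟨M1, hM1⟩ := isCompact_Icc.exists_bound_of_continuousOn (s := Icc (-D) D)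
    hf.continuous.continuousOn
  obtain ⟨M2, hM2⟩ := isCompact_Icc.exists_bound_of_continuousOn (s := Icc (-R) R)
    hf.continuous.continuousOn
  have hM1' : 0 ≤ M1 := (norm_nonneg _).trans (hM1 0 ⟨by linarith, by linarith⟩)
  have hM2' : 0 ≤ M2 := (norm_nonneg _).trans (hM2 0 ⟨by linarith, by linarith⟩)
  refine ⟨D + M1 + M2 + R, by positivity, ?_⟩
  intro ν hν1 u h hDu t ht x hx
  have hν := h.hν
  have htpos : 0 < t := hT1.trans_le ht
  have hRt : (σ * t)⁻¹ ≤ R := by rw [hR]; gcongr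
  have hinit : ∀ x, f (u 0 x) - ν * iteratedDeriv 1 (u 0) x ≤ M1 + D := by
    intro x
    have h1 := abs_le.1 (hDu ▸ D_ux h x)
    have h2 := abs_le.1 (hDu ▸ D_u h x)
    have h3 := (le_abs_self _).trans (hM1 (u 0 x) h2)
    have h4 : -(ν * iteratedDeriv 1 (u 0) x) ≤ D := by
      have : ν * (-iteratedDeriv 1 (u 0) x) ≤ ν * D := by gcongr; linarith
      have : ν * D ≤ 1 * D := by gcongr
      linarith
    linarith
  have h5 := flux_bound h hinit htpos.le x
  have h6 := (neg_abs_le _).trans' (neg_le_neg (hM2 (u t x)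
    (abs_le.1 ((sol_abs_le h htpos hx).trans hRt))))
  have h7 := (oleinik h htpos x).trans hRt
  have h8 : ν * iteratedDeriv 1 (u t) x ≤ R := by
    have a1 : ν * iteratedDeriv 1 (u t) x ≤ ν * R := by gcongr
    have a2 : ν * R ≤ 1 * R := by gcongr
    linarith
  rw [le_div_iff₀ hν]
  have : |iteratedDeriv 1 (u t) x| * ν = |ν * iteratedDeriv 1 (u t) x| := by
    rw [abs_mul, abs_of_pos hν, mul_comm]
  rw [this, abs_le]
  constructor <;> linarith

/-- pointwise-in-time lower bound at good times. -/
lemma good_lower {f : ℝ → ℝ} {σ D T1 c1 : ℝ} (hf : ContDiff ℝ (⊤ : ℕ∞) f) (hσ : 0 < σ)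
    (hD : 0 < D) (hT1 : 0 < T1) (hc1 : 0 < c1) (n : ℕ) {p : ℝ≥0∞} (hp : 1 ≤ p) :
    ∃ k > 0, ∀ ν, ν ≤ 1 → ∀ u, IsBurgersSolution f σ ν u → burgersD u = D → ∀ t, T1 ≤ t →
      c1 ≤ ν * (∫ x in (0:ℝ)..1, (iteratedDeriv 1 (u t) x) ^ 2) →
      k * ν ^ (-(max 0 (((n+1 : ℕ) : ℝ) - (1 / p).toReal))) ≤ sobLp (n+1) p (u t) := by
  obtain ⟨C2, hC2, hux⟩ := ux_bound hf hσ hD hT1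
  have hR : 0 < (σ * T1)⁻¹ := by positivity
  set B := 2 * (σ * T1)⁻¹ with hB
  have hBpos : 0 < B := by positivity
  have hr := inv_p_le_one hp
  have pre : ∀ ν, ν ≤ 1 → ∀ u, IsBurgersSolution f σ ν u → ∀ t, T1 ≤ t →
      c1 ≤ ν * (∫ x in (0:ℝ)..1, (iteratedDeriv 1 (u t) x) ^ 2) →
      c1 / ν ≤ (∫ x in (0:ℝ)..1, (iteratedDeriv 1 (u t) x) ^ 2) ∧
      (∫ x in (0:ℝ)..1, |iteratedDeriv 1 (u t) x|) ≤ B := by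
    intro ν hν1 u h t ht hg
    have htpos : 0 < t := hT1.trans_le ht
    constructor
    · rw [div_le_iff₀ h.hν]; linarith
    · refine (sol_ux_L1 h htpos).trans ?_
      rw [hB]; gcongr
  have hmax : max 0 (((n+1 : ℕ) : ℝ) - (1 / p).toReal) = (n:ℝ) + 1 - (1 / p).toReal := by
    push_cast
    apply max_eq_right
    have : (0:ℝ) ≤ n := Nat.cast_nonneg n
    linarith
  rw [hmax]
  rcases n with _ | n
  · refine ⟨(c1 / (2 * B)) * (c1 / (2 * C2 ^ 2)) ^ (1 / p).toReal, by positivity, ?_⟩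
    intro ν hν1 u h hDu t ht hg
    obtain ⟨h2, h1⟩ := pre ν hν1 u h t ht hg
    have htpos : 0 < t := hT1.trans_le ht
    have := one_lower (sol_cont_iter_x h 1 htpos.le) hp h.hν hc1 hBpos hC2 h2 h1
      (hux ν hν1 u h hDu t ht)
    simpa [sobLp] using this
  · obtain ⟨c, hc, hlow⟩ := hi_lower n hp (l := c1 / (2 * B)) (B := B) (by positivity) hBpos
    refine ⟨c, hc, ?_⟩
    intro ν hν1 u h hDu t ht hg
    obtain ⟨h2, h1⟩ := pre ν hν1 u h t ht hg
    have htpos : 0 < t := hT1.trans_le ht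
    have := hlow (fun k => iteratedDeriv (k+1) (u t))
      (fun k x => sol_x_hasDerivAt h (k+1) htpos.le x) ν h.hν
      (exists_big (sol_cont_iter_x h 1 htpos.le) h.hν hc1 hBpos h2 h1) h1
      (fun j => exists_zero_of_int (sol_cont_iter_x h (j+1) htpos.le) (sol_int_ux h htpos.le j))
    have e : ((n+1 : ℕ) : ℝ) + 1 - (1 / p).toReal = (n:ℝ) + 2 - (1 / p).toReal := by
      push_cast; ring
    rw [e]
    exact this

lemma core {f : ℝ → ℝ} {σ D Ct : ℝ} (hCt : 0 < Ct)
    (hCtb : ∀ ν, 0 < ν → ν ≤ 1 →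
      ∀ u : ℝ → ℝ → ℝ, IsBurgersSolution f σ ν u → burgersD u = D →
        ∀ t, 0 ≤ t → sobLp 1 2 (u t) ^ 2 ≤ Ct * ν⁻¹)
    (hf : ContDiff ℝ (⊤ : ℕ∞) f) (hσ : 0 < σ) (hD : 0 < D)
    (m : ℕ) {p : ℝ≥0∞} (hp : 1 ≤ p) {α : ℝ} (hα : 0 < α) :
    ∃ k > 0, ∃ q > 0, ∀ ν, ν ≤ 1 →
      ∀ u : ℝ → ℝ → ℝ, IsBurgersSolution f σ ν u → burgersD u = D →
        q * (k * ν ^ (-(max 0 ((m : ℝ) - (1 / p).toReal)))) ^ α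
          ≤ ∫ t in (burgersT₁ D Ct)..(burgersT₂ σ D Ct), sobLp m p (u t) ^ α := by
  set T1 := burgersT₁ D Ct with hT1
  set T2 := burgersT₂ σ D Ct with hT2
  have hT1pos : 0 < T1 := by rw [hT1, burgersT₁]; positivity
  have hT2a : 3 / 2 * T1 ≤ T2 := le_max_left _ _
  have hT2b : 2 * D * σ⁻¹ ≤ T2 := le_max_right _ _
  have hT12 : T1 < T2 := by linarith
  have hCT1 : 2 * Ct * T1 = (D ^ 2)⁻¹ / 2 := by rw [hT1, burgersT₁]; field_simp; norm_num
  set d := (D ^ 2)⁻¹ with hd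
  have hdpos : 0 < d := by positivity
  have hcontA : ∀ ν u, IsBurgersSolution f σ ν u →
      ContinuousOn (fun t => sobLp m p (u t) ^ α) (Icc T1 T2) := by
    intro ν u h
    have h1 : ContinuousOn (fun t => sobLp m p (u t)) (Ici 0) :=
      sobLp_contOn (W := fun t => iteratedDeriv m (u t)) (sol_cont_iter h m) hp
    exact (h1.mono (fun t ht => hT1pos.le.trans ht.1)).rpow_const (fun _ _ => Or.inr hα.le)
  rcases m with _ | n
  · have hR : 0 < (σ * T1)⁻¹ := by positivity
    refine ⟨d / 4 / (σ * T1)⁻¹, by positivity, T1 / 2, by positivity, ?_⟩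
    intro ν hν1 u h hDu
    have hν := h.hν
    have hmax : max 0 (((0:ℕ) : ℝ) - (1 / p).toReal) = 0 := by
      apply max_eq_left
      have : 0 ≤ (1 / p).toReal := ENNReal.toReal_nonneg
      push_cast; linarith
    rw [hmax, neg_zero, Real.rpow_zero, mul_one]
    have hA := hcontA ν u h
    have hAnn : ∀ t, 0 ≤ sobLp 0 p (u t) ^ α := fun t =>
      Real.rpow_nonneg ENNReal.toReal_nonneg _
    have iA : IntervalIntegrable (fun t => sobLp 0 p (u t) ^ α) volume T1 T2 := by
      apply ContinuousOn.intervalIntegrable; rwa [uIcc_of_le hT12.le]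
    have h1 : ∫ t in T1..(3 / 2 * T1), sobLp 0 p (u t) ^ α ≤ ∫ t in T1..T2, sobLp 0 p (u t) ^ α :=
      intervalIntegral.integral_mono_interval le_rfl (by linarith) hT2a
        (Filter.Eventually.of_forall hAnn) iA
    have h2 : ∫ t in T1..(3 / 2 * T1), (d / 4 / (σ * T1)⁻¹) ^ α ≤
        ∫ t in T1..(3 / 2 * T1), sobLp 0 p (u t) ^ α := by
      apply intervalIntegral.integral_mono_on (by linarith) (by simp)
      · apply ContinuousOn.intervalIntegrable
        rw [uIcc_of_le (by linarith)]
        exact hA.mono (Icc_subset_Icc le_rfl hT2a)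
      · intro t ht
        have htpos : 0 < t := hT1pos.trans_le ht.1
        have c0 : Continuous (u t) := cont_x (sol_cont0 h) htpos.le
        have hE := E_lower h (hCtb ν hν hν1 u h hDu) htpos.le
        rw [hDu, ← hd] at hE
        have hE2 : d / 4 ≤ ∫ x in (0:ℝ)..1, u t x ^ 2 := by
          have : 2 * Ct * t ≤ 2 * Ct * (3 / 2 * T1) := by
            have := ht.2
            gcongr
          linarith
        have hRt : (σ * t)⁻¹ ≤ (σ * T1)⁻¹ := by
          have := ht.1
          gcongr
        have hL := L1_lower h htpos hR hRt hE2
        have hH := int_le_eLpNorm c0 hp le_rfl one_pos (by norm_num)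
        rw [Real.one_rpow, one_mul, zero_add] at hH
        apply Real.rpow_le_rpow (by positivity) _ hα.le
        unfold sobLp
        rw [iteratedDeriv_zero]
        linarith
    simp only [intervalIntegral.integral_const, smul_eq_mul] at h2
    have e : 3 / 2 * T1 - T1 = T1 / 2 := by ring
    rw [e] at h2
    linarith
  · have hT' : 0 < T2 - T1 := by linarith
    obtain ⟨k, hk, hlow⟩ := good_lower hf hσ hD hT1pos
      (c1 := (d / 8) / (2 * (T2 - T1))) (by positivity) n hp
    refine ⟨k, hk, (d / 8) / (2 * Ct), by positivity, ?_⟩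
    intro ν hν1 u h hDu
    have hν := h.hν
    apply time_lower (g := fun t => ν * ∫ x in (0:ℝ)..1, (iteratedDeriv 1 (u t) x) ^ 2)
      hT12 hCt (by positivity) (by positivity)
    · exact ((ux_sq_contOn h).mono (fun t ht => hT1pos.le.trans ht.1)).const_mul ν
    · exact hcontA ν u h
    · intro t ht
      have ht0 : 0 ≤ t := hT1pos.le.trans ht.1
      have := hCtb ν hν hν1 u h hDu t ht0
      unfold sobLp at this
      rw [eLpNorm_two_cont (sol_cont_iter_x h 1 ht0)] at this
      calc _ ≤ ν * (Ct * ν⁻¹) := by gcongr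
        _ = Ct := by field_simp
    · intro t _
      exact Real.rpow_nonneg ENNReal.toReal_nonneg _
    · rw [intervalIntegral.integral_const_mul]
      have h1 := energy h hT1pos.le hT12.le
      have h2 := E_lower h (hCtb ν hν hν1 u h hDu) hT1pos.le
      have h3 := E_upper h (hT1pos.trans hT12)
      rw [hDu, ← hd] at h2
      have h4 : ((σ * T2)⁻¹) ^ 2 ≤ d / 4 := by
        have a1 : 2 * D ≤ σ * T2 := by
          calc 2 * D = σ * (2 * D * σ⁻¹) := by field_simp
            _ ≤ _ := by gcongr
        have a2 : 0 < T2 := hT1pos.trans hT12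
        have a3 : 0 ≤ (σ * T2)⁻¹ := by positivity
        calc ((σ * T2)⁻¹) ^ 2 ≤ ((2 * D)⁻¹) ^ 2 := by gcongr
          _ = d / 4 := by rw [hd]; field_simp; norm_num
      linarith
    · intro t ht hg
      exact Real.rpow_le_rpow (by positivity) (hlow ν hν1 u h hDu t ht.1 hg) hα.le

/-- For every integer `m ≥ 0`, every `p ∈ [1,∞]` and every
`α > 0`, with `γ = max(0, m - 1/p)`, there is `c > 0` depending only on
`f`, `D`, `m`, `p`, `α` such that for every `ν ∈ (0,1]`,
`{|u(t)|_{m,p}^α}^{1/α} ≥ c ν^{-γ}`. -/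
theorem statement11 (f : ℝ → ℝ) (σ D Ct : ℝ) (hCt : 0 < Ct)
    (hCtb : ∀ ν, 0 < ν → ν ≤ 1 →
      ∀ u : ℝ → ℝ → ℝ, IsBurgersSolution f σ ν u → burgersD u = D →
        ∀ t, 0 ≤ t → sobLp 1 2 (u t) ^ 2 ≤ Ct * ν⁻¹)
    (m : ℕ) (p : ℝ≥0∞) (hp : 1 ≤ p) (α : ℝ) (hα : 0 < α) :
    ∃ c > 0, ∀ ν, 0 < ν → ν ≤ 1 →
      ∀ u : ℝ → ℝ → ℝ, IsBurgersSolution f σ ν u → burgersD u = D →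
        c * ν ^ (-(max 0 ((m : ℝ) - (1 / p).toReal)))
          ≤ (timeAvg (burgersT₁ D Ct) (burgersT₂ σ D Ct)
              (fun t => sobLp m p (u t) ^ α)) ^ (1 / α) := by

  by_cases hex : ∃ ν u, IsBurgersSolution f σ ν u ∧ burgersD u = D
  · obtain ⟨ν0, u0, h0, hD0⟩ := hex
    have hD : 0 < D := hD0 ▸ (D_L1 h0).1
    obtain ⟨k, hk, q, hq, hcore⟩ := core hCt hCtb h0.hf h0.hσ hD m hp hα
    have hT1pos : 0 < burgersT₁ D Ct := by rw [burgersT₁]; positivity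
    have hT2a : 3 / 2 * burgersT₁ D Ct ≤ burgersT₂ σ D Ct := le_max_left _ _
    have hT : 0 < (burgersT₂ σ D Ct - burgersT₁ D Ct)⁻¹ := inv_pos.2 (by linarith)
    set w := (burgersT₂ σ D Ct - burgersT₁ D Ct)⁻¹ with hw
    refine ⟨k * (w * q) ^ (1 / α), by positivity, ?_⟩
    intro ν hν hν1 u h hDu
    have h1 := hcore ν hν1 u h hDu
    set X := k * ν ^ (-(max 0 ((m : ℝ) - (1 / p).toReal))) with hX
    have hXpos : 0 < X := by positivity
    have h2 : w * q * X ^ α ≤ timeAvg (burgersT₁ D Ct) (burgersT₂ σ D Ct)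
        (fun t => sobLp m p (u t) ^ α) := by
      unfold timeAvg
      rw [mul_assoc]
      gcongr
    have h3 := Real.rpow_le_rpow (by positivity) h2 (by positivity : 0 ≤ 1 / α)
    refine le_trans (le_of_eq ?_) h3
    rw [Real.mul_rpow (x := w * q) (y := X ^ α) (by positivity) (by positivity),
      ← Real.rpow_mul hXpos.le,
      mul_one_div_cancel hα.ne', Real.rpow_one, hX]
    ring
  · refine ⟨1, one_pos, ?_⟩
    intro ν hν hν1 u h hDu
    exact absurd ⟨ν, u, h, hDu⟩ hex
end

section
/- For every p ≥ 0 there is a constant C > 0, depending only on f, D and p, such that for every ν ∈ (0,1] and every ℓ ∈ (0,1], the structure function satisfies S_p(ℓ) ≤ C ℓ^p if 0 ≤ p ≤ 1, and S_p(ℓ) ≤ C ℓ^p ν^{−(p−1)} if p ≥ 1. -/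
open MeasureTheory Set
open scoped ENNReal

namespace BurgersAux

/-- Abstract maximum principle. -/
lemma max_principle (w : ℝ → ℝ → ℝ)
    (hc : ContinuousOn (Function.uncurry w) (Ici (0:ℝ) ×ˢ univ))
    (hper : ∀ t x, w t (x + 1) = w t x)
    (hder : ∀ t, 0 < t → ∀ x, IsLocalMax (w t) x → ∃ a ≤ 0, HasDerivAt (fun s => w s x) a t)
    (M : ℝ) (hM : ∀ x, w 0 x ≤ M) (t : ℝ) (ht : 0 ≤ t) (x : ℝ) : w t x ≤ M := by
  have key : ∀ ε > 0, w t x ≤ M + ε * t := by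
    intro ε hε
    have hK : IsCompact (Icc (0:ℝ) t ×ˢ Icc (0:ℝ) 1) := isCompact_Icc.prod isCompact_Icc
    have hKne : (Icc (0:ℝ) t ×ˢ Icc (0:ℝ) 1).Nonempty := ⟨(0, 0), by simp [ht]⟩
    have hsub : (Icc (0:ℝ) t ×ˢ Icc (0:ℝ) 1) ⊆ Ici (0:ℝ) ×ˢ univ := by
      rintro ⟨a, b⟩ ⟨h1, h2⟩
      exact ⟨h1.1, trivial⟩
    have hcc : ContinuousOn (fun z : ℝ × ℝ => Function.uncurry w z - ε * z.1)
        (Icc (0:ℝ) t ×ˢ Icc (0:ℝ) 1) := (hc.mono hsub).sub (by fun_prop)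
    obtain ⟨⟨t0, x0⟩, ⟨ht0, hx0⟩, hmax⟩ := hK.exists_isMaxOn hKne hcc
    have hmax' : ∀ s ∈ Icc (0:ℝ) t, ∀ y, w s y - ε * s ≤ w t0 x0 - ε * t0 := by
      intro s hs y
      have hp : Function.Periodic (w s) 1 := hper s
      obtain ⟨y', hy', hyy⟩ := hp.exists_mem_Ico₀ one_pos y
      have := hmax (show (s, y') ∈ Icc (0:ℝ) t ×ˢ Icc (0:ℝ) 1 from ⟨hs, hy'.1, hy'.2.le⟩)
      simp only [Function.uncurry, mem_ofPred_eq] at this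
      rw [hyy]; exact this
    simp only at ht0 hx0
    have h0 : t0 = 0 := by
      by_contra hne
      have hpos : 0 < t0 := lt_of_le_of_ne ht0.1 (Ne.symm hne)
      have hlm : IsLocalMax (w t0) x0 := by
        refine Filter.Eventually.of_forall fun y => ?_
        have := hmax' t0 ht0 y
        linarith
      obtain ⟨a, ha, hd⟩ := hder t0 hpos x0 hlm
      have hd2 : HasDerivAt (fun s => w s x0 - ε * s) (a - ε * 1) t0 :=
        hd.sub ((hasDerivAt_id t0).const_mul ε)
      have hneg : a - ε * 1 < 0 := by linarith
      have hsl := (hasDerivAt_iff_tendsto_slope_left_right.1 hd2).1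
      have h1 := hsl.eventually (gt_mem_nhds hneg)
      have h2 : ∀ᶠ s in nhdsWithin t0 (Iio t0), 0 < s ∧ s < t0 := by
        filter_upwards [self_mem_nhdsWithin, mem_nhdsWithin_of_mem_nhds (Ioi_mem_nhds hpos)]
          with s h1 h2
        exact ⟨h2, h1⟩
      obtain ⟨s, hs1, hs2, hs3⟩ := (h1.and h2).exists
      have := hmax' s ⟨hs2.le, hs3.le.trans ht0.2⟩ x0
      rw [slope_def_field] at hs1
      have : 0 ≤ (w s x0 - ε * s - (w t0 x0 - ε * t0)) / (s - t0) :=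
        div_nonneg_of_nonpos (by linarith) (by linarith)
      linarith
    have := hmax' t ⟨ht, le_rfl⟩ x
    subst h0
    have := hM x0
    linarith
  refine le_of_forall_pos_le_add fun ε hε => ?_
  have h := key (ε / (t + 1)) (by positivity)
  have : ε / (t + 1) * t ≤ ε := by
    rw [div_mul_eq_mul_div, div_le_iff₀ (by positivity)]
    nlinarith
  linarith

lemma deriv2_nonpos (g : ℝ → ℝ) (x : ℝ) (hg : ContinuousAt g x) (h : IsLocalMax g x) :
    deriv (deriv g) x ≤ 0 := by
  by_contra hcon
  push Not at hcon
  have h1 := isLocalMin_of_deriv_deriv_pos hcon h.deriv_eq_zero hg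
  have he : g =ᶠ[nhds x] fun _ => g x := by
    filter_upwards [h, h1] with y h2 h3
    exact le_antisymm h2 h3
  have h4 : deriv g =ᶠ[nhds x] deriv (fun _ => g x) := he.deriv
  have h5 := h4.deriv_eq
  simp at h5
  linarith

section
variable {f : ℝ → ℝ} {σ ν : ℝ} {u : ℝ → ℝ → ℝ}

lemma space_smooth (h : IsBurgersSolution f σ ν u) (t : ℝ) (ht : 0 ≤ t) :
    ContDiff ℝ (⊤ : ℕ∞) (u t) := by
  have : ContDiff ℝ (⊤ : ℕ∞) (fun x : ℝ => (t, x)) := by fun_prop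
  exact h.hu.comp_contDiff this (fun x => ⟨ht, trivial⟩)

lemma ux_cont (h : IsBurgersSolution f σ ν u) :
    ContinuousOn (Function.uncurry fun t x => deriv (u t) x) (Ici (0:ℝ) ×ˢ univ) := by
  have hud : UniqueDiffOn ℝ (Ici (0:ℝ) ×ˢ (univ : Set ℝ)) :=
    (uniqueDiffOn_Ici 0).prod uniqueDiffOn_univ
  have hc := h.hu.continuousOn_fderivWithin hud (by simp)
  have hc2 := hc.clm_apply (continuousOn_const (c := ((0:ℝ), (1:ℝ))))
  refine hc2.congr ?_
  rintro ⟨t, x⟩ ⟨ht, -⟩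
  have hd := (h.hu.differentiableOn (by simp) (t, x) ⟨ht, trivial⟩).hasFDerivWithinAt
  have hg : HasDerivWithinAt (fun y : ℝ => (t, y)) ((0:ℝ), (1:ℝ)) univ x :=
    ((hasDerivAt_const x t).prodMk (hasDerivAt_id x)).hasDerivWithinAt
  have := hd.comp_hasDerivWithinAt x hg (fun y _ => ⟨ht, trivial⟩)
  rw [hasDerivWithinAt_univ] at this
  exact this.deriv

lemma hasDerivAt_clm_const {c : ℝ → (ℝ × ℝ) →L[ℝ] ℝ} {c' : (ℝ × ℝ) →L[ℝ] ℝ} {s : ℝ}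
    (hc : HasDerivAt c c' s) (z : ℝ × ℝ) : HasDerivAt (fun r => c r z) (c' z) s := by
  have h := hc.clm_apply (hasDerivAt_const s z)
  simpa using h

lemma time_facts (h : IsBurgersSolution f σ ν u) (t : ℝ) (ht : 0 < t) (x : ℝ) :
    HasDerivAt (fun s => u s x) (deriv (fun s => u s x) t) t ∧
    ∃ a, HasDerivAt (fun s => deriv (u s) x) a t ∧
      HasDerivAt (fun y => deriv (fun s => u s y) t) a x := by
  set g := Function.uncurry u with hg
  have hΩ : IsOpen (Ioi (0:ℝ) ×ˢ (univ : Set ℝ)) := isOpen_Ioi.prod isOpen_univ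
  have hat : ∀ z : ℝ × ℝ, 0 < z.1 → ContDiffAt ℝ (⊤ : ℕ∞) g z := fun z hz =>
    h.hu.contDiffAt (Filter.mem_of_superset (hΩ.mem_nhds ⟨hz, trivial⟩)
      (fun y hy => ⟨mem_Ici.2 (le_of_lt (mem_Ioi.1 hy.1)), trivial⟩))
  have hcT : ∀ s y : ℝ, HasDerivAt (fun r : ℝ => (r, y)) ((1:ℝ), (0:ℝ)) s := fun s y =>
    (hasDerivAt_id s).prodMk (hasDerivAt_const s y)
  have hcX : ∀ s y : ℝ, HasDerivAt (fun r : ℝ => (s, r)) ((0:ℝ), (1:ℝ)) y := fun s y =>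
    (hasDerivAt_const y s).prodMk (hasDerivAt_id y)
  have hT : ∀ s y, 0 < s → HasDerivAt (fun r => u r y) (fderiv ℝ g (s, y) (1, 0)) s := by
    intro s y hs
    have hd := ((hat (s, y) hs).differentiableAt (by simp)).hasFDerivAt
    exact hd.comp_hasDerivAt s (hcT s y)
  have hX : ∀ s y, 0 < s → HasDerivAt (u s) (fderiv ℝ g (s, y) (0, 1)) y := by
    intro s y hs
    have hd := ((hat (s, y) hs).differentiableAt (by simp)).hasFDerivAt
    exact hd.comp_hasDerivAt y (hcX s y)
  refine ⟨by rw [(hT t x ht).deriv]; exact hT t x ht, ?_⟩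
  have hF : HasFDerivAt (fderiv ℝ g) (fderiv ℝ (fderiv ℝ g) (t, x)) (t, x) := by
    have := (hat (t, x) ht).fderiv_right (m := 1) (by norm_cast)
    exact (this.differentiableAt (by simp)).hasFDerivAt
  have hsymm : IsSymmSndFDerivAt ℝ g (t, x) :=
    (hat (t, x) ht).isSymmSndFDerivAt (by simp; norm_cast)
  refine ⟨fderiv ℝ (fderiv ℝ g) (t, x) (1, 0) (0, 1), ?_, ?_⟩
  · have h1 := hasDerivAt_clm_const (hF.comp_hasDerivAt t (hcT t x)) (0, 1)
    refine h1.congr_of_eventuallyEq ?_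
    filter_upwards [Ioi_mem_nhds ht] with s hs
    exact (hX s x hs).deriv
  · have h1 := hasDerivAt_clm_const (hF.comp_hasDerivAt x (hcX t x)) (1, 0)
    rw [hsymm.eq (1, 0) (0, 1)]
    refine h1.congr_of_eventuallyEq ?_
    filter_upwards with y
    exact (hT t y ht).deriv

lemma deriv_per (h : IsBurgersSolution f σ ν u) (t x : ℝ) :
    deriv (u t) (x + 1) = deriv (u t) x := by
  rw [← deriv_comp_add_const]
  congr 1
  funext y
  exact h.hper t y

lemma ux_smooth (h : IsBurgersSolution f σ ν u) (t : ℝ) (ht : 0 ≤ t) :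
    ContDiff ℝ (⊤ : ℕ∞) (deriv (u t)) :=
  (contDiff_infty_iff_deriv.1 (space_smooth h t ht)).2

lemma f_deriv (h : IsBurgersSolution f σ ν u) : ContDiff ℝ (⊤ : ℕ∞) (deriv f) :=
  (contDiff_infty_iff_deriv.1 h.hf).2

lemma ux_upper (h : IsBurgersSolution f σ ν u) (M : ℝ) (hM : ∀ x, deriv (u 0) x ≤ M)
    (t : ℝ) (ht : 0 ≤ t) (x : ℝ) : deriv (u t) x ≤ M := by
  refine max_principle (fun t x => deriv (u t) x) (ux_cont h) (deriv_per h) ?_ M hM t ht x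
  intro t ht x hmax
  obtain ⟨-, a, ha1, ha2⟩ := time_facts h t ht x
  refine ⟨a, ?_, ha1⟩
  have hv := ux_smooth h t ht.le
  have hvx : ContDiff ℝ (⊤ : ℕ∞) (deriv (deriv (u t))) := (contDiff_infty_iff_deriv.1 hv).2
  have hvxx : HasDerivAt (deriv (deriv (u t))) (deriv (deriv (deriv (u t))) x) x :=
    (hvx.differentiable (by simp) x).hasDerivAt
  have hvx0 : deriv (deriv (u t)) x = 0 := hmax.deriv_eq_zero
  have hvx1 : HasDerivAt (deriv (u t)) 0 x := by
    rw [← hvx0]; exact (hv.differentiable (by simp) x).hasDerivAt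
  have hu1 : HasDerivAt (u t) (deriv (u t) x) x :=
    ((space_smooth h t ht.le).differentiable (by simp) x).hasDerivAt
  have hf1 : HasDerivAt (deriv f) (deriv (deriv f) (u t x)) (u t x) :=
    ((f_deriv h).differentiable (by simp) _).hasDerivAt
  have h1 := (hvxx.const_mul ν).sub ((hf1.comp x hu1).mul hvx1)
  have h2 : (fun y => deriv (fun s => u s y) t) =
      (fun y => ν * deriv (deriv (u t)) y) - ((deriv f ∘ u t) * deriv (u t)) := by
    funext y
    have := h.hpde t ht y
    simp only [Pi.sub_apply, Pi.mul_apply, Function.comp]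
    linarith
  rw [h2] at ha2
  rw [ha2.unique h1]
  have h3 := deriv2_nonpos _ x hv.continuous.continuousAt hmax
  have h4 := h.hconv (u t x)
  rw [iteratedDeriv_succ, iteratedDeriv_one] at h4
  have := h.hν
  have := h.hσ
  have h5 : 0 ≤ deriv (deriv f) (u t x) * (deriv (u t) x * deriv (u t) x) :=
    mul_nonneg (by linarith) (mul_self_nonneg _)
  have h6 : ν * deriv (deriv (deriv (u t))) x ≤ 0 :=
    mul_nonpos_of_nonneg_of_nonpos h.hν.le h3
  nlinarith

lemma flux_upper (h : IsBurgersSolution f σ ν u) (M : ℝ)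
    (hM : ∀ x, f (u 0 x) - ν * deriv (u 0) x ≤ M)
    (t : ℝ) (ht : 0 ≤ t) (x : ℝ) : f (u t x) - ν * deriv (u t) x ≤ M := by
  refine max_principle (fun t x => f (u t x) - ν * deriv (u t) x) ?_ ?_ ?_ M hM t ht x
  · have h1 := h.hf.continuous.comp_continuousOn h.hu.continuousOn
    exact h1.sub ((ux_cont h).const_mul ν)
  · intro t x
    simp only [h.hper t x, deriv_per h t x]
  intro t ht x hmax
  obtain ⟨hut, a, ha1, ha2⟩ := time_facts h t ht x
  have hv := ux_smooth h t ht.le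
  have hf1 : ∀ z, HasDerivAt f (deriv f z) z := fun z =>
    (h.hf.differentiable (by simp) z).hasDerivAt
  have hW : ∀ y, HasDerivAt (fun y => f (u t y) - ν * deriv (u t) y)
      (-(deriv (fun s => u s y) t)) y := by
    intro y
    have hu1 : HasDerivAt (u t) (deriv (u t) y) y :=
      ((space_smooth h t ht.le).differentiable (by simp) y).hasDerivAt
    have hv1 : HasDerivAt (deriv (u t)) (deriv (deriv (u t)) y) y :=
      (hv.differentiable (by simp) y).hasDerivAt
    have h1 := ((hf1 (u t y)).comp y hu1).sub (hv1.const_mul ν)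
    have := h.hpde t ht y
    have e : -(deriv (fun s => u s y) t) =
        deriv f (u t y) * deriv (u t) y - ν * deriv (deriv (u t)) y := by linarith
    rw [e]
    exact h1
  have hut0 : deriv (fun s => u s x) t = 0 := by
    have := hmax.hasDerivAt_eq_zero (hW x)
    linarith
  have h3 := deriv2_nonpos _ x (hW x).continuousAt hmax
  have h4 : deriv (fun y => f (u t y) - ν * deriv (u t) y) =
      fun y => -(deriv (fun s => u s y) t) := funext fun y => (hW y).deriv
  rw [h4, ha2.fun_neg.deriv] at h3
  refine ⟨_, ?_, ((hf1 (u t x)).comp t hut).sub (ha1.const_mul ν)⟩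
  rw [hut0]
  have : 0 ≤ ν * a := mul_nonneg h.hν.le (by linarith)
  linarith

lemma init_bound (h : IsBurgersSolution f σ ν u) (x : ℝ) : |deriv (u 0) x| ≤ burgersD u := by
  refine le_trans ?_ (le_max_right _ _)
  have hv := (ux_smooth h 0 le_rfl).continuous
  unfold sobLp
  rw [iteratedDeriv_one]
  set v := deriv (u 0)
  set μ := volume.restrict (Ioc (0:ℝ) 1) with hμ
  obtain ⟨B, hB⟩ := isCompact_Icc.exists_bound_of_continuousOn (s := Icc (0:ℝ) 1) hv.continuousOn
  have hfin : eLpNorm v ⊤ μ ≠ ⊤ := by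
    refine (eLpNormEssSup_lt_top_of_ae_bound (C := B) ?_).ne
    rw [ae_restrict_iff' measurableSet_Ioc]
    exact Filter.Eventually.of_forall fun y hy => hB y ⟨hy.1.le, hy.2⟩
  set N := (eLpNorm v ⊤ μ).toReal
  have hae : ∀ᵐ y ∂μ, |v y| ≤ N := by
    filter_upwards [enorm_ae_le_eLpNormEssSup v μ] with y hy
    have := ENNReal.toReal_mono hfin hy
    rw [toReal_enorm] at this
    exact this
  have hopen : IsOpen ({y | N < |v y|} ∩ Ioo 0 1) :=
    (isOpen_lt continuous_const hv.abs).inter isOpen_Ioo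
  have hnull : volume ({y | N < |v y|} ∩ Ioo 0 1) = 0 := by
    rw [ae_iff, hμ] at hae
    simp only [not_le] at hae
    rw [Measure.restrict_apply (isOpen_lt continuous_const hv.abs).measurableSet] at hae
    exact measure_mono_null (inter_subset_inter_right _ Ioo_subset_Ioc_self) hae
  have hempty := hopen.eq_empty_of_measure_zero hnull
  have hIoo : Ioo (0:ℝ) 1 ⊆ {y | |v y| ≤ N} := by
    intro y hy
    by_contra hc
    have : y ∈ ({y | N < |v y|} ∩ Ioo (0:ℝ) 1) := ⟨by simpa using hc, hy⟩
    rw [hempty] at this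
    exact this
  have hIcc := closure_minimal hIoo (isClosed_le hv.abs continuous_const)
  rw [closure_Ioo zero_ne_one] at hIcc
  have hp : Function.Periodic v 1 := deriv_per h 0
  obtain ⟨y, hy, hxy⟩ := hp.exists_mem_Ico₀ one_pos x
  rw [hxy]
  exact hIcc ⟨hy.1, hy.2.le⟩

end

/-- one-sided Lipschitz -/
lemma onesided (v : ℝ → ℝ) (hv : Differentiable ℝ v) (D : ℝ) (hD : ∀ x, deriv v x ≤ D)
    (x s : ℝ) (hs : 0 ≤ s) : v (x + s) - v x ≤ D * s := by
  have h := image_sub_le_mul_sub_of_deriv_le hv hD (x := x) (y := x + s) (by linarith)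
  simpa using h

lemma sup_bound (v : ℝ → ℝ) (hv : Differentiable ℝ v) (hper : Function.Periodic v 1)
    (hmean : ∫ x in Ioc (0:ℝ) 1, v x = 0) (D : ℝ) (hD0 : 0 ≤ D) (hD : ∀ x, deriv v x ≤ D)
    (y : ℝ) : |v y| ≤ D := by
  have hosc : ∀ x y, v y - v x ≤ D := by
    intro x y
    obtain ⟨z, hz, hyz⟩ := hper.exists_mem_Ico one_pos y x
    have := onesided v hv D hD x (z - x) (by linarith [hz.1])
    rw [add_sub_cancel, ← hyz] at this
    have h2 : D * (z - x) ≤ D * 1 := mul_le_mul_of_nonneg_left (by linarith [hz.2]) hD0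
    linarith
  have hint : IntegrableOn v (Ioc 0 1) :=
    (hv.continuous.integrableOn_Icc (a := 0) (b := 1)).mono_set Ioc_subset_Icc_self
  have hc : ∀ c : ℝ, ∫ x in Ioc (0:ℝ) 1, c = c := by intro c; simp
  have hci : ∀ c : ℝ, IntegrableOn (fun _ : ℝ => c) (Ioc (0:ℝ) 1) := fun c => by simp
  rw [abs_le]
  constructor
  · have := integral_mono hint (hci (v y + D)) (fun x => by have := hosc y x; simp only; linarith)
    rw [hmean, hc] at this
    linarith
  · have := integral_mono (hci (v y - D)) hint (fun x => by have := hosc x y; simp only; linarith)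
    rw [hmean, hc] at this
    linarith

lemma L1_bound (v : ℝ → ℝ) (hv : Differentiable ℝ v) (hper : Function.Periodic v 1)
    (D : ℝ) (hD0 : 0 ≤ D) (hD : ∀ x, deriv v x ≤ D) (l : ℝ) (hl : 0 ≤ l) :
    ∫ x in Ioc (0:ℝ) 1, |v (x + l) - v x| ≤ 2 * D * l := by
  have hcv := hv.continuous
  have hii : ∀ g : ℝ → ℝ, Continuous g → IntegrableOn g (Ioc 0 1) := fun g hg =>
    (hg.integrableOn_Icc (a := 0) (b := 1)).mono_set Ioc_subset_Icc_self
  have h1 : ∫ x in Ioc (0:ℝ) 1, |v (x + l) - v x| ≤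
      ∫ x in Ioc (0:ℝ) 1, (2 * D * l - (v (x + l) - v x)) := by
    refine integral_mono (hii _ (by fun_prop)) (hii _ (by fun_prop)) fun x => ?_
    have := onesided v hv D hD x l hl
    have h0 : 0 ≤ D * l := mul_nonneg hD0 hl
    simp only
    rw [abs_le]
    constructor <;> linarith
  have h2 : ∫ x in Ioc (0:ℝ) 1, v (x + l) = ∫ x in Ioc (0:ℝ) 1, v x := by
    rw [← intervalIntegral.integral_of_le zero_le_one,
      ← intervalIntegral.integral_of_le zero_le_one,
      intervalIntegral.integral_comp_add_right]
    have := hper.intervalIntegral_add_eq l 0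
    rw [add_comm 1 l, zero_add]
    simpa using this
  rw [integral_sub (hii _ (by fun_prop)) (hii _ (by fun_prop)),
    integral_sub (hii _ (by fun_prop)) (hii _ (by fun_prop)), h2] at h1
  simpa using h1

lemma slice_low (v : ℝ → ℝ) (hv : Differentiable ℝ v) (hper : Function.Periodic v 1)
    (D : ℝ) (hD0 : 0 ≤ D) (hD : ∀ x, deriv v x ≤ D) (l : ℝ) (hl : 0 < l)
    (p : ℝ) (hp : 0 ≤ p) (hp1 : p ≤ 1) :
    ∫ x in Ioc (0:ℝ) 1, |v (x + l) - v x| ^ p ≤ (1 + 2 * D) * l ^ p := by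
  have hcv := hv.continuous
  have hii : ∀ g : ℝ → ℝ, Continuous g → IntegrableOn g (Ioc 0 1) := fun g hg =>
    (hg.integrableOn_Icc (a := 0) (b := 1)).mono_set Ioc_subset_Icc_self
  have hL := L1_bound v hv hper D hD0 hD l hl.le
  have h1 : ∫ x in Ioc (0:ℝ) 1, |v (x + l) - v x| ^ p ≤
      ∫ x in Ioc (0:ℝ) 1, (l ^ p + l ^ p / l * |v (x + l) - v x|) := by
    refine integral_mono (hii _ ?_) (hii _ (by fun_prop)) fun x => ?_
    · exact Continuous.rpow_const (by fun_prop) fun _ => Or.inr hp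
    · simp only
      set d := |v (x + l) - v x|
      have hd : 0 ≤ d := abs_nonneg _
      have e : d ^ p = l ^ p * (d / l) ^ p := by
        rw [← Real.mul_rpow hl.le (by positivity), mul_div_cancel₀ _ hl.ne']
      have e2 : (d / l) ^ p ≤ 1 + d / l := by
        have h0 : 0 ≤ d / l := by positivity
        rcases le_total (d / l) 1 with h | h
        · linarith [Real.rpow_le_one h0 h hp]
        · have := Real.rpow_le_rpow_of_exponent_le h hp1
          rw [Real.rpow_one] at this
          linarith
      have := mul_le_mul_of_nonneg_left e2 (Real.rpow_nonneg hl.le p)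
      rw [e]
      calc _ ≤ _ := this
        _ = _ := by ring
  rw [integral_add (hii _ (by fun_prop)) (hii _ (by fun_prop)), integral_const_mul] at h1
  have h3 : l ^ p / l * ∫ x in Ioc (0:ℝ) 1, |v (x + l) - v x| ≤ l ^ p / l * (2 * D * l) :=
    mul_le_mul_of_nonneg_left hL (by positivity)
  have h4 : l ^ p / l * (2 * D * l) = 2 * D * l ^ p := by field_simp
  simp at h1
  linarith

lemma slice_high (v : ℝ → ℝ) (hv : Differentiable ℝ v) (hper : Function.Periodic v 1)
    (D : ℝ) (hD0 : 0 ≤ D) (hD : ∀ x, deriv v x ≤ D) (E : ℝ) (hE : ∀ x, |deriv v x| ≤ E)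
    (l : ℝ) (hl : 0 < l)
    (p : ℝ) (hp1 : 1 ≤ p) :
    ∫ x in Ioc (0:ℝ) 1, |v (x + l) - v x| ^ p ≤ (E * l) ^ (p - 1) * (2 * D * l) := by
  have hcv := hv.continuous
  have hii : ∀ g : ℝ → ℝ, Continuous g → IntegrableOn g (Ioc 0 1) := fun g hg =>
    (hg.integrableOn_Icc (a := 0) (b := 1)).mono_set Ioc_subset_Icc_self
  have hL := L1_bound v hv hper D hD0 hD l hl.le
  have hE0 : 0 ≤ E := (abs_nonneg _).trans (hE 0)
  have h1 : ∫ x in Ioc (0:ℝ) 1, |v (x + l) - v x| ^ p ≤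
      ∫ x in Ioc (0:ℝ) 1, ((E * l) ^ (p - 1) * |v (x + l) - v x|) := by
    refine integral_mono (hii _ ?_) (hii _ (by fun_prop)) fun x => ?_
    · exact Continuous.rpow_const (by fun_prop) fun _ => Or.inr (by linarith)
    · simp only
      have hlip : |v (x + l) - v x| ≤ E * l := by
        have := convex_univ.norm_image_sub_le_of_norm_deriv_le (𝕜 := ℝ) (f := v) (C := E)
          (x := x) (y := x + l)
          (fun x _ => hv x) (fun x _ => hE x) trivial trivial
        simpa [abs_of_pos hl] using this
      set d := |v (x + l) - v x|
      have hd : 0 ≤ d := abs_nonneg _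
      have e : d ^ p = d ^ (p - 1) * d := by
        rcases hd.eq_or_lt with h | h
        · rw [← h, Real.zero_rpow (by linarith), mul_zero]
        · rw [Real.rpow_sub_one h.ne', div_mul_cancel₀ _ h.ne']
      rw [e]
      exact mul_le_mul_of_nonneg_right (Real.rpow_le_rpow hd hlip (by linarith)) hd
  rw [integral_const_mul] at h1
  exact h1.trans (mul_le_mul_of_nonneg_left hL (by positivity))

lemma timeAvg_le (T₁ T₂ : ℝ) (hT0 : 0 ≤ T₁) (hT : T₁ ≤ T₂) (A : ℝ → ℝ) (B : ℝ) (hB : 0 ≤ B)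
    (hA0 : ∀ t, 0 ≤ A t) (hA : ∀ t, 0 < t → A t ≤ B) : timeAvg T₁ T₂ A ≤ B := by
  have h := intervalIntegral.norm_integral_le_of_norm_le_const (a := T₁) (b := T₂) (f := A) (C := B)
    (fun t ht => by
      rw [uIoc_of_le hT] at ht
      rw [Real.norm_of_nonneg (hA0 t)]
      exact hA t (hT0.trans_lt ht.1))
  rw [abs_of_nonneg (by linarith)] at h
  have h2 := (le_abs_self _).trans h
  unfold timeAvg
  rcases hT.eq_or_lt with h3 | h3
  · simp [h3, hB]
  · rw [inv_mul_le_iff₀ (by linarith)]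
    linarith

end BurgersAux

/-- For every `p ≥ 0` there is `C > 0` depending only on `f`,
`D`, `p` such that for every `ν ∈ (0,1]` and every `ℓ ∈ (0,1]`,
`S_p(ℓ) ≤ C ℓ^p` if `0 ≤ p ≤ 1`, and `S_p(ℓ) ≤ C ℓ^p ν^{-(p-1)}` if `p ≥ 1`. -/
theorem statement13 (f : ℝ → ℝ) (σ D Ct : ℝ) (hCt : 0 < Ct)
    (hCtb : ∀ ν, 0 < ν → ν ≤ 1 →
      ∀ u : ℝ → ℝ → ℝ, IsBurgersSolution f σ ν u → burgersD u = D →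
        ∀ t, 0 ≤ t → sobLp 1 2 (u t) ^ 2 ≤ Ct * ν⁻¹)
    (p : ℝ) (hp : 0 ≤ p) :
    ∃ C > 0, ∀ ν, 0 < ν → ν ≤ 1 →
      ∀ u : ℝ → ℝ → ℝ, IsBurgersSolution f σ ν u → burgersD u = D →
        ∀ ℓ, 0 < ℓ → ℓ ≤ 1 →
          (p ≤ 1 →
            structFun (burgersT₁ D Ct) (burgersT₂ σ D Ct) u p ℓ ≤ C * ℓ ^ p) ∧
          (1 ≤ p →
            structFun (burgersT₁ D Ct) (burgersT₂ σ D Ct) u p ℓ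
              ≤ C * (ℓ ^ p * ν ^ (-(p - 1)))) := by
  classical
  by_cases hex : ContDiff ℝ (⊤ : ℕ∞) f ∧ 0 ≤ D
  swap
  · refine ⟨1, one_pos, fun ν hν hν1 u hu huD => ?_⟩
    exfalso
    refine hex ⟨hu.hf, ?_⟩
    rw [← huD]
    exact (abs_nonneg _).trans (BurgersAux.init_bound hu 0)
  obtain ⟨hfs, hD0⟩ := hex
  obtain ⟨K, hK⟩ := isCompact_Icc.exists_bound_of_continuousOn (s := Icc (-D) D)
    hfs.continuous.continuousOn
  have hK0 : 0 ≤ K := (norm_nonneg _).trans (hK 0 ⟨by linarith, hD0⟩)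
  have hT1 : 0 ≤ burgersT₁ D Ct := by unfold burgersT₁; positivity
  have hT12 : burgersT₁ D Ct ≤ burgersT₂ σ D Ct :=
    le_trans (by linarith) (le_max_left _ _)
  set E := 2 * K + D with hE
  have hE0 : 0 ≤ E := by positivity
  refine ⟨1 + 2 * D + E ^ (p - 1) * (2 * D), by positivity, ?_⟩
  intro ν hν hν1 u hu huD l hl hl1
  have hEp : 0 ≤ E ^ (p - 1) * (2 * D) := by positivity
  have hlp : 0 ≤ l ^ p := by positivity
  have hA0 : ∀ t, 0 ≤ ∫ x in Ioc (0:ℝ) 1, |u t (x + l) - u t x| ^ p := fun t =>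
    integral_nonneg fun x => Real.rpow_nonneg (abs_nonneg _) _
  have hi : ∀ x, |deriv (u 0) x| ≤ D := fun x => huD ▸ BurgersAux.init_bound hu x
  have hup : ∀ t, 0 ≤ t → ∀ x, deriv (u t) x ≤ D :=
    BurgersAux.ux_upper hu D fun x => (abs_le.1 (hi x)).2
  have hdiff : ∀ t, 0 ≤ t → Differentiable ℝ (u t) := fun t ht =>
    (BurgersAux.space_smooth hu t ht).differentiable (by simp)
  have hub : ∀ t, 0 ≤ t → ∀ x, |f (u t x)| ≤ K := fun t ht x =>
    hK _ (abs_le.1 (BurgersAux.sup_bound (u t) (hdiff t ht) (hu.hper t) (hu.hmean t ht) D hD0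
      (hup t ht) x))
  have hfl := BurgersAux.flux_upper hu (K + D) (fun x => by
    have h1 := (abs_le.1 (hub 0 le_rfl x)).2
    have h2 := (abs_le.1 (hi x)).1
    have h3 : ν * (-deriv (u 0) x) ≤ ν * D := mul_le_mul_of_nonneg_left (by linarith) hν.le
    have h4 : ν * D ≤ 1 * D := mul_le_mul_of_nonneg_right hν1 hD0
    linarith)
  have habs : ∀ t, 0 ≤ t → ∀ x, |deriv (u t) x| ≤ E / ν := by
    intro t ht x
    have h1 := (abs_le.1 (hub t ht x)).1
    have h2 := hfl t ht x
    have h3 := hup t ht x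
    have h4 : ν * D ≤ 1 * D := mul_le_mul_of_nonneg_right hν1 hD0
    have h5 : ν * deriv (u t) x ≤ ν * D := mul_le_mul_of_nonneg_left h3 hν.le
    rw [le_div_iff₀ hν, ← abs_of_pos hν, ← abs_mul, abs_le]
    constructor <;> linarith
  constructor
  · intro hp1
    refine BurgersAux.timeAvg_le _ _ hT1 hT12 _ _ (by positivity) hA0 fun t ht => ?_
    refine (BurgersAux.slice_low (u t) (hdiff t ht.le) (hu.hper t) D hD0 (hup t ht.le) l hl p hp
      hp1).trans ?_
    exact mul_le_mul_of_nonneg_right (by linarith) hlp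
  · intro hp1
    refine BurgersAux.timeAvg_le _ _ hT1 hT12 _ _ (by positivity) hA0 fun t ht => ?_
    refine (BurgersAux.slice_high (u t) (hdiff t ht.le) (hu.hper t) D hD0 (hup t ht.le) (E / ν)
      (habs t ht.le) l hl p hp1).trans ?_
    have e : (E / ν * l) ^ (p - 1) * (2 * D * l) =
        E ^ (p - 1) * (2 * D) * (l ^ p * ν ^ (-(p - 1))) := by
      rw [Real.mul_rpow (by positivity) hl.le, Real.div_rpow hE0 hν.le, Real.rpow_neg hν.le,
        Real.rpow_sub_one hl.ne']
      field_simp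
    rw [e]
    exact mul_le_mul_of_nonneg_right (by linarith) (by positivity)
end

section
/- For every p ≥ 0 there exist constants C > 0 and C₁ > 0, depending only on f, D and p, such that for every ν ∈ (0,1] and every ℓ ∈ (C₁ν, 1], the structure function satisfies S_p(ℓ) ≤ C ℓ^p if 0 ≤ p ≤ 1, and S_p(ℓ) ≤ C ℓ if p ≥ 1. -/
open MeasureTheory Set
open scoped ENNReal

lemma second_deriv_nonpos {g : ℝ → ℝ} {a : ℝ} (hg : Continuous g)
    (h : IsLocalMax g a) : deriv (deriv g) a ≤ 0 := by
  by_contra! hc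
  have h0 : deriv g a = 0 := h.deriv_eq_zero
  have hmin := isLocalMin_of_deriv_deriv_pos hc h0 hg.continuousAt
  have he : g =ᶠ[nhds a] fun _ => g a := by
    filter_upwards [h, hmin] with x h1 h2
    exact le_antisymm h1 h2
  have h3 := he.deriv.deriv_eq
  simp at h3
  linarith

namespace IsBurgersSolution

variable {f : ℝ → ℝ} {σ ν : ℝ} {u : ℝ → ℝ → ℝ}

lemma smooth_x (H : IsBurgersSolution f σ ν u) {t : ℝ} (ht : 0 ≤ t) :
    ContDiff ℝ (⊤ : ℕ∞) (u t) := by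
  have h := H.hu.comp (s := univ) (f := fun x : ℝ => (t, x))
    (by fun_prop : ContDiff ℝ (⊤ : ℕ∞) (fun x : ℝ => (t, x))).contDiffOn
    (fun x _ => ⟨ht, mem_univ _⟩)
  exact contDiffOn_univ.1 h

lemma diff_t (H : IsBurgersSolution f σ ν u) {t : ℝ} (ht : 0 < t) (x : ℝ) :
    DifferentiableAt ℝ (fun s => u s x) t := by
  have h1 : ContDiffAt ℝ (⊤ : ℕ∞) (Function.uncurry u) (t, x) :=
    H.hu.contDiffAt (prod_mem_nhds (Ici_mem_nhds ht) Filter.univ_mem)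
  have h2 : DifferentiableAt ℝ (Function.uncurry u) (t, x) :=
    h1.differentiableAt (by simp)
  have h3 : DifferentiableAt ℝ (fun s : ℝ => (s, x)) t := by fun_prop
  exact h2.comp t h3

lemma deriv_init_le (H : IsBurgersSolution f σ ν u) (x : ℝ) :
    deriv (u 0) x ≤ sobLp 1 ⊤ (u 0) := by
  have hs := H.smooth_x le_rfl
  have hc : Continuous (deriv (u 0)) := hs.continuous_deriv (by simp)
  have hper : Function.Periodic (deriv (u 0)) 1 := by
    intro x
    have : (fun y => u 0 (y + 1)) = u 0 := funext (H.hper 0)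
    rw [← deriv_comp_add_const, this]
  obtain ⟨B, hB⟩ := (isCompact_Icc (a := (0:ℝ)) (b := 1)).exists_bound_of_continuousOn
    hc.continuousOn
  have hfin : eLpNormEssSup (deriv (u 0)) (volume.restrict (Ioc (0:ℝ) 1)) < ⊤ := by
    apply eLpNormEssSup_lt_top_of_ae_bound (C := B)
    filter_upwards [ae_restrict_mem measurableSet_Ioc] with y hy
    exact hB y (Ioc_subset_Icc_self hy)
  have hae : ∀ᵐ y ∂(volume.restrict (Ioc (0:ℝ) 1)), deriv (u 0) y ≤ sobLp 1 ⊤ (u 0) := by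
    filter_upwards [enorm_ae_le_eLpNormEssSup (deriv (u 0)) (volume.restrict (Ioc (0:ℝ) 1))]
      with y hy
    have h1 := ENNReal.toReal_mono hfin.ne hy
    simp only [sobLp, iteratedDeriv_one, eLpNorm_exponent_top]
    rw [toReal_enorm] at h1
    exact (le_abs_self _).trans h1
  set S := sobLp 1 ⊤ (u 0)
  have hopen : IsOpen ({y | S < deriv (u 0) y} ∩ Ioo (0:ℝ) 1) :=
    (isOpen_lt continuous_const hc).inter isOpen_Ioo
  have hnull : volume ({y | S < deriv (u 0) y} ∩ Ioo (0:ℝ) 1) = 0 := by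
    rw [ae_restrict_iff' measurableSet_Ioc] at hae
    refine measure_mono_null ?_ (ae_iff.1 hae)
    rintro y ⟨h1, h2⟩
    intro hc2
    exact absurd (hc2 (Ioo_subset_Ioc_self h2)) (not_le.2 h1)
  have hemp := hopen.eq_empty_of_measure_zero hnull
  have hcl : closure (Ioo (0:ℝ) 1) ⊆ {y | deriv (u 0) y ≤ S} := by
    apply closure_minimal _ (isClosed_le hc continuous_const)
    intro y hy
    by_contra hlt
    have : y ∈ ({y | S < deriv (u 0) y} ∩ Ioo (0:ℝ) 1) := by
      refine ⟨?_, hy⟩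
      have hlt' : ¬ (deriv (u 0) y ≤ S) := hlt
      exact not_le.1 hlt'
    rw [hemp] at this
    exact this
  rw [closure_Ioo (by norm_num)] at hcl
  obtain ⟨y, hy, hxy⟩ := hper.exists_mem_Ico₀ one_pos x
  rw [hxy]
  exact hcl (Ico_subset_Icc_self hy)

lemma key (H : IsBurgersSolution f σ ν u) {K : ℝ} (hK : 0 ≤ K)
    (hS : sobLp 1 ⊤ (u 0) ≤ K) {T : ℝ} (hT : 0 ≤ T) (ε : ℝ) (hε : 0 < ε) :
    ∀ t ∈ Icc 0 T, ∀ x, ∀ h ∈ Icc (0:ℝ) 1, u t (x + h) - u t x - K * h - ε * t ≤ 0 := by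
  have hcont : ContinuousOn (Function.uncurry u) (Ici (0:ℝ) ×ˢ univ) := H.hu.continuousOn
  let φ : ℝ × ℝ × ℝ → ℝ := fun q =>
    u q.1 (q.2.1 + q.2.2) - u q.1 q.2.1 - K * q.2.2 - ε * q.1
  let A : Set (ℝ × ℝ × ℝ) := Icc 0 T ×ˢ Icc (0:ℝ) 1 ×ˢ Icc (0:ℝ) 1
  have hA : IsCompact A := isCompact_Icc.prod (isCompact_Icc.prod isCompact_Icc)
  have hφ : ContinuousOn φ A := by
    have h1 : ContinuousOn (fun q : ℝ × ℝ × ℝ => u q.1 (q.2.1 + q.2.2)) A :=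
      hcont.comp (f := fun q : ℝ × ℝ × ℝ => (q.1, q.2.1 + q.2.2)) (by fun_prop)
        (fun q hq => ⟨hq.1.1, mem_univ _⟩)
    have h2 : ContinuousOn (fun q : ℝ × ℝ × ℝ => u q.1 q.2.1) A :=
      hcont.comp (f := fun q : ℝ × ℝ × ℝ => (q.1, q.2.1)) (by fun_prop)
        (fun q hq => ⟨hq.1.1, mem_univ _⟩)
    exact ((h1.sub h2).sub (by fun_prop)).sub (by fun_prop)
  obtain ⟨⟨t, x, h⟩, ⟨ht, hx, hh⟩, hmax⟩ := hA.exists_isMaxOn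
    ⟨(0, 0, 0), ⟨⟨le_rfl, hT⟩, ⟨le_rfl, zero_le_one⟩, ⟨le_rfl, zero_le_one⟩⟩⟩ hφ
  have hglob : ∀ s ∈ Icc 0 T, ∀ y, ∀ k ∈ Icc (0:ℝ) 1, φ (s, y, k) ≤ φ (t, x, h) := by
    intro s hs y k hk
    have hper : Function.Periodic (fun y => φ (s, y, k)) 1 := by
      intro y
      simp only [φ]
      rw [H.hper, show y + 1 + k = y + k + 1 by ring, H.hper]
    obtain ⟨z, hz, hyz⟩ := hper.exists_mem_Ico₀ one_pos y
    refine hyz.trans_le ?_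
    exact hmax (show (s, z, k) ∈ A from ⟨hs, Ico_subset_Icc_self hz, hk⟩)
  suffices hle : φ (t, x, h) ≤ 0 from fun s hs y k hk => (hglob s hs y k hk).trans hle
  by_contra! hpos
  simp only [mem_Icc] at ht hh
  have hpos' : 0 < u t (x + h) - u t x - K * h - ε * t := hpos
  have hst := H.smooth_x ht.1
  have hdst : Differentiable ℝ (u t) := hst.differentiable (by simp)
  have hεt : 0 ≤ ε * t := mul_nonneg hε.le ht.1
  have hKh : 0 ≤ K * h := mul_nonneg hK hh.1
  -- interior in h
  have hh0 : 0 < h := by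
    rcases hh.1.eq_or_lt with e | e
    · subst e; simp at hpos'; linarith
    · exact e
  have hh1 : h < 1 := by
    rcases hh.2.eq_or_lt with e | e
    · subst e; rw [H.hper] at hpos'; linarith
    · exact e
  have ht0 : 0 < t := by
    rcases ht.1.eq_or_lt with e | e
    · subst e
      have := image_sub_le_mul_sub_of_deriv_le hdst
        (fun z => (H.deriv_init_le z).trans hS) (show x ≤ x + h by linarith)
      have e2 : K * (x + h - x) = K * h := by ring
      linarith
    · exact e
  -- local max in y
  have hymax : IsLocalMax (fun y => u t y - K * y) (x + h) := by
    have : Ioo x (x + 1) ∈ nhds (x + h) := Ioo_mem_nhds (by linarith) (by linarith)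
    filter_upwards [this] with y hy
    have := hglob t ht x (y - x) ⟨by linarith [hy.1], by linarith [hy.2]⟩
    simp only [φ, add_sub_cancel] at this
    linarith
  have hxmax : IsLocalMax (fun y => -(u t y) + K * y) x := by
    have : Ioo (x + h - 1) (x + h) ∈ nhds x := Ioo_mem_nhds (by linarith) (by linarith)
    filter_upwards [this] with y hy
    have := hglob t ht y (x + h - y) ⟨by linarith [hy.2], by linarith [hy.1]⟩
    simp only [φ, add_sub_cancel] at this
    linarith
  have hd1 : deriv (fun y => u t y - K * y) = fun y => deriv (u t) y - K := by
    funext y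
    have := (hdst y).hasDerivAt.fun_sub ((hasDerivAt_id y).const_mul K)
    simpa using this.deriv
  have hd2 : deriv (fun y => -(u t y) + K * y) = fun y => -deriv (u t) y + K := by
    funext y
    have := (hdst y).hasDerivAt.fun_neg.fun_add ((hasDerivAt_id y).const_mul K)
    simpa using this.deriv
  have hc := hst.continuous
  have a1 := hymax.deriv_eq_zero
  have a2 := hxmax.deriv_eq_zero
  have b1 := second_deriv_nonpos (by fun_prop) hymax
  have b2 := second_deriv_nonpos (by fun_prop) hxmax
  rw [hd1] at a1 b1
  rw [hd2] at a2 b2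
  simp only [deriv_sub_const, deriv_add_const, deriv.fun_neg] at a1 a2 b1 b2
  have p1 := H.hpde t ht0 (x + h)
  have p2 := H.hpde t ht0 x
  -- monotonicity of the derivative of f
  have hmono : Monotone (deriv f) := by
    apply monotone_of_deriv_nonneg
    · have h2 : ContDiff ℝ 1 (deriv f) :=
        ((contDiff_infty_iff_deriv (f := f)).1 H.hf).2.of_le (by simp)
      exact h2.differentiable (by simp)
    · intro y
      have := H.hconv y
      rw [iteratedDeriv_succ, iteratedDeriv_one] at this
      exact H.hσ.le.trans this
  have hff := hmono (show u t x ≤ u t (x + h) by linarith)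
  -- time derivative
  have htd : 0 ≤ deriv (fun s => u s (x + h)) t - deriv (fun s => u s x) t - ε := by
    have hd : HasDerivAt (fun s => φ (s, x, h))
        (deriv (fun s => u s (x + h)) t - deriv (fun s => u s x) t - ε) t := by
      have := ((((H.diff_t ht0 (x + h)).hasDerivAt.fun_sub (H.diff_t ht0 x).hasDerivAt).sub_const
        (K * h)).fun_sub ((hasDerivAt_id t).const_mul ε))
      simpa [φ] using this
    have hsl := hasDerivWithinAt_iff_tendsto_slope.1 (hd.hasDerivWithinAt (s := Iio t))
    have hne : Iio t \ {t} = Iio t := by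
      ext s; simp only [mem_diff, mem_Iio, mem_singleton_iff]
      exact ⟨fun h => h.1, fun h => ⟨h, h.ne⟩⟩
    rw [hne] at hsl
    refine ge_of_tendsto hsl ?_
    filter_upwards [Ioo_mem_nhdsLT ht0] with s hs
    rw [slope_def_field]
    apply div_nonneg_of_nonpos
    · have := hglob s ⟨hs.1.le, hs.2.le.trans ht.2⟩ x h hh
      linarith
    · linarith [hs.2]
  have e1 : deriv (u t) (x + h) = K := by linarith
  have e2 : deriv (u t) x = K := by linarith
  rw [e1] at p1
  rw [e2] at p2
  have hm := mul_le_mul_of_nonneg_right hff hK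
  have n1 : ν * deriv (deriv (u t)) (x + h) ≤ 0 := mul_nonpos_of_nonneg_of_nonpos H.hν.le b1
  have n2 : 0 ≤ ν * deriv (deriv (u t)) x := mul_nonneg H.hν.le (by linarith)
  linarith

lemma onesided (H : IsBurgersSolution f σ ν u) {K : ℝ} (hK : 0 ≤ K)
    (hS : sobLp 1 ⊤ (u 0) ≤ K) {t : ℝ} (ht : 0 ≤ t) (x : ℝ) {h : ℝ} (hh : h ∈ Icc (0:ℝ) 1) :
    u t (x + h) - u t x ≤ K * h := by
  apply le_of_forall_pos_le_add
  intro δ hδ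
  have := H.key hK hS ht (δ / (t + 1)) (by positivity) t ⟨ht, le_rfl⟩ x h hh
  have h2 : δ / (t + 1) * t ≤ δ := by
    rw [div_mul_eq_mul_div, div_le_iff₀ (by positivity)]
    nlinarith
  linarith

lemma abs_le (H : IsBurgersSolution f σ ν u) {K : ℝ} (hK : 0 ≤ K)
    (hS : sobLp 1 ⊤ (u 0) ≤ K) {t : ℝ} (ht : 0 ≤ t) (x : ℝ) {h : ℝ} (hh : h ∈ Icc (0:ℝ) 1) :
    |u t (x + h) - u t x| ≤ K := by
  have h1 := H.onesided hK hS ht x hh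
  have h2 := H.onesided hK hS ht (x + h) (h := 1 - h) ⟨by linarith [hh.2], by linarith [hh.1]⟩
  rw [show x + h + (1 - h) = x + 1 by ring, H.hper] at h2
  rw [_root_.abs_le]
  constructor <;> nlinarith [hh.1, hh.2]

lemma int_abs_le (H : IsBurgersSolution f σ ν u) {K : ℝ} (hK : 0 ≤ K)
    (hS : sobLp 1 ⊤ (u 0) ≤ K) {t : ℝ} (ht : 0 ≤ t) {h : ℝ} (hh : h ∈ Icc (0:ℝ) 1) :
    ∫ x in Ioc (0:ℝ) 1, |u t (x + h) - u t x| ≤ 2 * K * h := by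
  have hc := (H.smooth_x ht).continuous
  have hper : Function.Periodic (u t) 1 := H.hper t
  have i1 : IntegrableOn (fun x => u t (x + h)) (Ioc (0:ℝ) 1) :=
    (by fun_prop : Continuous fun x => u t (x + h)).integrableOn_Ioc
  have i2 : IntegrableOn (u t) (Ioc (0:ℝ) 1) := hc.integrableOn_Ioc
  have hz : ∫ x in Ioc (0:ℝ) 1, (u t (x + h) - u t x) = 0 := by
    rw [integral_sub i1 i2, sub_eq_zero, ← intervalIntegral.integral_of_le zero_le_one,
      ← intervalIntegral.integral_of_le zero_le_one,
      intervalIntegral.integral_comp_add_right (fun x => u t x)]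
    have := hper.intervalIntegral_add_eq h 0
    simpa [add_comm] using this
  have hle : ∫ x in Ioc (0:ℝ) 1, |u t (x + h) - u t x|
      ≤ ∫ x in Ioc (0:ℝ) 1, (2 * (K * h) - (u t (x + h) - u t x)) := by
    apply integral_mono
    · exact (by fun_prop : Continuous fun x => |u t (x + h) - u t x|).integrableOn_Ioc
    · exact (by fun_prop :
        Continuous fun x => (2 * (K * h) - (u t (x + h) - u t x))).integrableOn_Ioc
    · intro x
      have := H.onesided hK hS ht x hh
      have h0 : 0 ≤ K * h := mul_nonneg hK hh.1
      simp only
      rw [_root_.abs_le]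
      constructor <;> linarith
  have i3 : IntegrableOn (fun x => u t (x + h) - u t x) (Ioc (0:ℝ) 1) := i1.sub i2
  have i4 : IntegrableOn (fun _ : ℝ => 2 * (K * h)) (Ioc (0:ℝ) 1) :=
    continuous_const.integrableOn_Ioc
  rw [integral_sub i4 i3, hz] at hle
  simp at hle
  linarith

end IsBurgersSolution

lemma structFun_le {T₁ T₂ : ℝ} (h1 : 0 ≤ T₁) (h2 : T₁ ≤ T₂) {u : ℝ → ℝ → ℝ} {p ℓ B : ℝ}
    (hB : 0 ≤ B)
    (h : ∀ t, 0 ≤ t → ∫ x in Ioc (0:ℝ) 1, |u t (x + ℓ) - u t x| ^ p ≤ B) :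
    structFun T₁ T₂ u p ℓ ≤ B := by
  unfold structFun timeAvg
  have hn := intervalIntegral.norm_integral_le_of_norm_le_const (a := T₁) (b := T₂) (C := B)
    (f := fun t => ∫ x in Ioc (0:ℝ) 1, |u t (x + ℓ) - u t x| ^ p) (by
      intro t ht
      rw [uIoc_of_le h2] at ht
      rw [Real.norm_of_nonneg (integral_nonneg fun x => by positivity)]
      exact h t (h1.trans ht.1.le))
  rw [abs_of_nonneg (by linarith)] at hn
  have hn' := (le_abs_self _).trans hn
  rcases h2.eq_or_lt with e | e
  · subst e; simpa using hB
  · rw [inv_mul_le_iff₀ (by linarith)]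
    linarith

/-- For every `p ≥ 0` there are `C > 0` and `C₁ > 0` depending
only on `f`, `D`, `p` such that for every `ν ∈ (0,1]` and every `ℓ ∈ (C₁ν, 1]`,
`S_p(ℓ) ≤ C ℓ^p` if `0 ≤ p ≤ 1`, and `S_p(ℓ) ≤ C ℓ` if `p ≥ 1`. -/
theorem statement14 (f : ℝ → ℝ) (σ D Ct : ℝ) (hCt : 0 < Ct)
    (hCtb : ∀ ν, 0 < ν → ν ≤ 1 →
      ∀ u : ℝ → ℝ → ℝ, IsBurgersSolution f σ ν u → burgersD u = D →
        ∀ t, 0 ≤ t → sobLp 1 2 (u t) ^ 2 ≤ Ct * ν⁻¹)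
    (p : ℝ) (hp : 0 ≤ p) :
    ∃ C > 0, ∃ C₁ > 0, ∀ ν, 0 < ν → ν ≤ 1 →
      ∀ u : ℝ → ℝ → ℝ, IsBurgersSolution f σ ν u → burgersD u = D →
        ∀ ℓ, C₁ * ν < ℓ → ℓ ≤ 1 →
          (p ≤ 1 →
            structFun (burgersT₁ D Ct) (burgersT₂ σ D Ct) u p ℓ ≤ C * ℓ ^ p) ∧
          (1 ≤ p →
            structFun (burgersT₁ D Ct) (burgersT₂ σ D Ct) u p ℓ ≤ C * ℓ) := by
  set M : ℝ := |D| + 1 with hM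
  have hM0 : 0 < M := by positivity
  refine ⟨1 + 2 * M + 2 * M ^ p, by positivity, 1, one_pos, ?_⟩
  intro ν hν hν1 u H hD ℓ hℓ hℓ1
  have hℓ0 : 0 < ℓ := by linarith
  have hh : ℓ ∈ Icc (0:ℝ) 1 := ⟨hℓ0.le, hℓ1⟩
  have hS : sobLp 1 ⊤ (u 0) ≤ M := by
    have : sobLp 1 ⊤ (u 0) ≤ D := hD ▸ le_max_right _ _
    linarith [le_abs_self D]
  have hT1 : 0 ≤ burgersT₁ D Ct := by unfold burgersT₁; positivity
  have hT2 : burgersT₁ D Ct ≤ burgersT₂ σ D Ct := by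
    have : 3 / 2 * burgersT₁ D Ct ≤ burgersT₂ σ D Ct := le_max_left _ _
    linarith
  have hMp : 0 < M ^ p := by positivity
  constructor
  · intro hp1
    apply structFun_le hT1 hT2 (by positivity)
    intro t ht
    have hc := (H.smooth_x ht).continuous
    have hI := H.int_abs_le hM0.le hS ht hh
    have hℓp : 0 < ℓ ^ p := by positivity
    have iabs : IntegrableOn (fun x => |u t (x + ℓ) - u t x|) (Ioc (0:ℝ) 1) :=
      (by fun_prop : Continuous fun x => |u t (x + ℓ) - u t x|).integrableOn_Ioc
    have hle : ∫ x in Ioc (0:ℝ) 1, |u t (x + ℓ) - u t x| ^ p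
        ≤ ∫ x in Ioc (0:ℝ) 1, (ℓ ^ p + ℓ ^ p / ℓ * |u t (x + ℓ) - u t x|) := by
      apply integral_mono
      · exact (Continuous.rpow_const (by fun_prop :
          Continuous fun x => |u t (x + ℓ) - u t x|) (fun _ => Or.inr hp)).integrableOn_Ioc
      · exact (by fun_prop : Continuous fun x =>
          (ℓ ^ p + ℓ ^ p / ℓ * |u t (x + ℓ) - u t x|)).integrableOn_Ioc
      · intro x
        simp only
        set a := |u t (x + ℓ) - u t x|
        have ha : 0 ≤ a := abs_nonneg _
        have hb : (a / ℓ) ^ p ≤ 1 + a / ℓ := by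
          rcases le_total (a / ℓ) 1 with h | h
          · have := Real.rpow_le_one (by positivity : 0 ≤ a / ℓ) h hp
            have : 0 ≤ a / ℓ := by positivity
            linarith
          · have := Real.rpow_le_rpow_of_exponent_le h hp1
            rw [Real.rpow_one] at this
            linarith
        rw [Real.div_rpow ha hℓ0.le, div_le_iff₀ hℓp] at hb
        calc a ^ p ≤ _ := hb
          _ = _ := by ring
    rw [integral_add (by simp) (iabs.const_mul _), integral_const_mul] at hle
    simp at hle
    have h3 : ℓ ^ p / ℓ * ∫ x in Ioc (0:ℝ) 1, |u t (x + ℓ) - u t x| ≤ ℓ ^ p * (2 * M) := by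
      calc _ ≤ ℓ ^ p / ℓ * (2 * M * ℓ) := by gcongr
        _ = _ := by field_simp
    have h4 : 0 < M ^ p * ℓ ^ p := by positivity
    linarith
  · intro hp1
    apply structFun_le hT1 hT2 (by positivity)
    intro t ht
    have hc := (H.smooth_x ht).continuous
    have hI := H.int_abs_le hM0.le hS ht hh
    have iabs : IntegrableOn (fun x => |u t (x + ℓ) - u t x|) (Ioc (0:ℝ) 1) :=
      (by fun_prop : Continuous fun x => |u t (x + ℓ) - u t x|).integrableOn_Ioc
    have hle : ∫ x in Ioc (0:ℝ) 1, |u t (x + ℓ) - u t x| ^ p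
        ≤ ∫ x in Ioc (0:ℝ) 1, M ^ (p - 1) * |u t (x + ℓ) - u t x| := by
      apply integral_mono
      · exact (Continuous.rpow_const (by fun_prop :
          Continuous fun x => |u t (x + ℓ) - u t x|) (fun _ => Or.inr hp)).integrableOn_Ioc
      · exact iabs.const_mul _
      · intro x
        have hb := H.abs_le hM0.le hS ht x hh
        simp only
        set a := |u t (x + ℓ) - u t x|
        have ha : 0 ≤ a := abs_nonneg _
        rcases ha.eq_or_lt with e | e
        · rw [← e, Real.zero_rpow (by linarith)]; simp
        · have : a ^ p = a ^ (p - 1) * a := by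
            rw [Real.rpow_sub_one e.ne']; field_simp
          rw [this]
          gcongr
    rw [integral_const_mul] at hle
    have h3 : M ^ (p - 1) * ∫ x in Ioc (0:ℝ) 1, |u t (x + ℓ) - u t x| ≤ 2 * M ^ p * ℓ := by
      calc _ ≤ M ^ (p - 1) * (2 * M * ℓ) := by gcongr
        _ = _ := by rw [Real.rpow_sub_one hM0.ne']; field_simp
    have h4 : 0 < (1 + 2 * M) * ℓ := by positivity
    linarith
end
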